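/- Inner bound for fully quantum distributed compression: let φ^{ABR} be a pure state on A⊗B⊗R. Then every rate pair (Q_A, Q_B) of nonnegative reals satisfying Q_A > ½ I(A;R)_φ, Q_B > ½ I(B;R)_φ, and Q_A + Q_B > ½ J(A;B)_φ is achievable for φ. -/

import Mathlib

open Matrix
open scoped ComplexOrder

open Classical in
/-- Von Neumann entropy `H(M) = −Tr[M log₂ M]`, via eigenvalues (with `0 log 0 = 0`). -/
noncomputable def vnEntropy {n : Type*} [Fintype n] [DecidableEq n] (M : Matrix n n ℂ) : ℝ :=
  if h : M.IsHermitian then ∑ i, -(h.eigenvalues i * Real.logb 2 (h.eigenvalues i)) else 0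

/-- Reduced state on `A` of a state vector on `A ⊗ (B × R)`. -/
noncomputable def redA {ιA ιB ιR : Type} [Fintype ιB] [Fintype ιR]
    (v : ιA × (ιB × ιR) → ℂ) : Matrix ιA ιA ℂ :=
  Matrix.of fun a a' => ∑ q : ιB × ιR, v (a, q) * star (v (a', q))

/-- Reduced state on `R` of a state vector on `A ⊗ (B × R)`. -/
noncomputable def redR {ιA ιB ιR : Type} [Fintype ιA] [Fintype ιB]
    (v : ιA × (ιB × ιR) → ℂ) : Matrix ιR ιR ℂ :=
  Matrix.of fun r r' => ∑ a : ιA, ∑ b : ιB, v (a, (b, r)) * star (v (a, (b, r')))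

/-- Reduced state on `A ⊗ R` of a state vector on `A ⊗ (B × R)`. -/
noncomputable def redAR {ιA ιB ιR : Type} [Fintype ιB]
    (v : ιA × (ιB × ιR) → ℂ) : Matrix (ιA × ιR) (ιA × ιR) ℂ :=
  Matrix.of fun p q => ∑ b : ιB, v (p.1, (b, p.2)) * star (v (q.1, (b, q.2)))

/-- The `n`-copy state vector `|φ⟩^{⊗n}` of `φ` on `A ⊗ (B × R)`, written on
`R^{⊗n} ⊗ (A^{⊗n} ⊗ B^{⊗n})`. -/
noncomputable def iidVec {ιA ιB ιR : Type} (φ : ιA × (ιB × ιR) → ℂ) (n : ℕ) :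
    (Fin n → ιR) × ((Fin n → ιA) × (Fin n → ιB)) → ℂ :=
  fun p => ∏ k : Fin n, φ (p.2.1 k, (p.2.2 k, p.1 k))

/-- The global isometry `I_{R^n} ⊗ (D ∘ (E_A ⊗ E_B))` of a distributed compression code,
with the output ordered as `(R^n × (Â × B̂)) × ((W_A × W_B) × W_C)`. -/
noncomputable def codeMap {ιA ιB ιR : Type} {n : ℕ} {γA ωA γB ωB ωC : Type}
    [Fintype γA] [Fintype γB] [Fintype ιR] [DecidableEq ιR]
    (EA : Matrix (γA × ωA) (Fin n → ιA) ℂ)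
    (EB : Matrix (γB × ωB) (Fin n → ιB) ℂ)
    (D : Matrix (((Fin n → ιA) × (Fin n → ιB)) × ωC) (γA × γB) ℂ) :
    Matrix (((Fin n → ιR) × ((Fin n → ιA) × (Fin n → ιB))) × ((ωA × ωB) × ωC))
      ((Fin n → ιR) × ((Fin n → ιA) × (Fin n → ιB))) ℂ :=
  Matrix.of fun p q =>
    if p.1.1 = q.1 then
      ∑ cA : γA, ∑ cB : γB,
        D (p.1.2, p.2.2) (cA, cB) * EA (cA, p.2.1.1) q.2.1 * EB (cB, p.2.1.2) q.2.2
    else 0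

/-- The fidelity `F = ⟨ψ'| Tr_{W_AW_BW_C}[(I ⊗ D∘(E_A⊗E_B)) ψ' (…)†] |ψ'⟩` of a
distributed compression code on `n` copies of `φ`, where `|ψ'⟩ = |φ⟩^{⊗n}`. -/
noncomputable def codeFidelity {ιA ιB ιR : Type} {n : ℕ} {γA ωA γB ωB ωC : Type}
    [Fintype ιA] [Fintype ιB] [Fintype ιR] [DecidableEq ιR]
    [Fintype γA] [Fintype γB] [Fintype ωA] [Fintype ωB] [Fintype ωC]
    (φ : ιA × (ιB × ιR) → ℂ)
    (EA : Matrix (γA × ωA) (Fin n → ιA) ℂ)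
    (EB : Matrix (γB × ωB) (Fin n → ιB) ℂ)
    (D : Matrix (((Fin n → ιA) × (Fin n → ιB)) × ωC) (γA × γB) ℂ) : ℝ :=
  (star (iidVec φ n) ⬝ᵥ
    (Matrix.of fun i j : (Fin n → ιR) × ((Fin n → ιA) × (Fin n → ιB)) =>
        ∑ w : (ωA × ωB) × ωC,
          (codeMap (ιR := ιR) EA EB D *
              Matrix.vecMulVec (iidVec φ n) (star (iidVec φ n)) *
              (codeMap (ιR := ιR) EA EB D)ᴴ) (i, w) (j, w)).mulVec
      (iidVec φ n)).re

/-- Reduced state on `A ⊗ B` of a state vector on `A ⊗ (B × R)`. -/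
noncomputable def redAB {ιA ιB ιR : Type} [Fintype ιR]
    (v : ιA × (ιB × ιR) → ℂ) : Matrix (ιA × ιB) (ιA × ιB) ℂ :=
  Matrix.of fun p q => ∑ r : ιR, v (p.1, (p.2, r)) * star (v (q.1, (q.2, r)))

/-- Reduced state on `B` of a state vector on `A ⊗ (B × R)`. -/
noncomputable def redB {ιA ιB ιR : Type} [Fintype ιA] [Fintype ιR]
    (v : ιA × (ιB × ιR) → ℂ) : Matrix ιB ιB ℂ :=
  Matrix.of fun b b' => ∑ a : ιA, ∑ r : ιR, v (a, (b, r)) * star (v (a, (b', r)))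

/-- Reduced state on `B ⊗ R` of a state vector on `A ⊗ (B × R)`. -/
noncomputable def redBR {ιA ιB ιR : Type} [Fintype ιA]
    (v : ιA × (ιB × ιR) → ℂ) : Matrix (ιB × ιR) (ιB × ιR) ℂ :=
  Matrix.of fun p q => ∑ a : ιA, v (a, (p.1, p.2)) * star (v (a, (q.1, q.2)))

/-- A rate pair `(Q_A, Q_B)` is achievable for the source `φ^{ABR}` if for every `ε > 0`
there is `N` such that for every `n ≥ N` there is a distributed compression code on `n`
copies of `φ` (isometric encoders `E_A : A^{⊗n} → C_A ⊗ W_A`, `E_B : B^{⊗n} → C_B ⊗ W_B`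
and an isometric decoder `D : C_A ⊗ C_B → Â ⊗ B̂ ⊗ W_C`) with `log₂ d_{C_A} ≤ n Q_A`,
`log₂ d_{C_B} ≤ n Q_B`, and fidelity at least `1 − ε`. -/
noncomputable def achievable {ιA ιB ιR : Type}
    [Fintype ιA] [DecidableEq ιA] [Fintype ιB] [DecidableEq ιB]
    [Fintype ιR] [DecidableEq ιR]
    (φ : ιA × (ιB × ιR) → ℂ) (QA QB : ℝ) : Prop :=
  ∀ ε : ℝ, 0 < ε → ∃ N : ℕ, ∀ n : ℕ, N ≤ n →
    ∃ (dCA dWA dCB dWB dWC : ℕ)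
      (EA : Matrix (Fin dCA × Fin dWA) (Fin n → ιA) ℂ)
      (EB : Matrix (Fin dCB × Fin dWB) (Fin n → ιB) ℂ)
      (D : Matrix (((Fin n → ιA) × (Fin n → ιB)) × Fin dWC) (Fin dCA × Fin dCB) ℂ),
      EAᴴ * EA = 1 ∧ EBᴴ * EB = 1 ∧ Dᴴ * D = 1 ∧
      Real.logb 2 dCA ≤ (n : ℝ) * QA ∧ Real.logb 2 dCB ≤ (n : ℝ) * QB ∧
      1 - ε ≤ codeFidelity φ EA EB D

/-! Compress each party to its typical subspace, where the spectrum is nearly flat, and split the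
result into a transmitted and a kept part by a random unitary: random phases and a random
permutation around a flat unitary suffice, being a decoupling ensemble. On average the two kept
parts are then close to maximally mixed and uncorrelated with the reference, with an error governed
by the dimensions and purities of the typical subspaces; the rate inequalities, together with
`H(R) ≤ H(A) + H(B)`, make it exponentially small. By Uhlmann's theorem the receiver of the
transmitted parts can then nearly restore the source. The encoders and the decoder built this way
are only contractions, and they dilate to isometries by enlarging the discarded systems. -/

section

open Filter
open scoped Kronecker MatrixOrder Matrix.Norms.Frobenius

section FrobeniusNorm

variable {m n : Type*} [Fintype m] [Fintype n]

lemma frobenius_norm_sq (X : Matrix m n ℂ) : ‖X‖ ^ 2 = ∑ i, ∑ j, ‖X i j‖ ^ 2 := by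
  rw [frobenius_norm_def, ← Real.sqrt_eq_rpow, Real.sq_sqrt (by positivity)]
  simp only [Real.rpow_two]

lemma trace_conjTranspose_mul_self (X : Matrix m n ℂ) : (Xᴴ * X).trace = (‖X‖ ^ 2 : ℝ) := by
  rw [frobenius_norm_sq, Finset.sum_comm]
  simp [trace, mul_apply, Complex.conj_mul']

lemma re_trace_conjTranspose_mul_self (X : Matrix m n ℂ) : (Xᴴ * X).trace.re = ‖X‖ ^ 2 := by
  rw [trace_conjTranspose_mul_self, Complex.ofReal_re]

lemma norm_trace_conjTranspose_mul_le (X Y : Matrix m n ℂ) : ‖(Xᴴ * Y).trace‖ ≤ ‖X‖ * ‖Y‖ := by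
  refine abs_le_of_sq_le_sq' ?_ (by positivity) |>.2
  have norm_le : ‖(Xᴴ * Y).trace‖ ≤ ∑ p : n × m, ‖X p.2 p.1‖ * ‖Y p.2 p.1‖ := by
    simp only [trace, diag_apply, mul_apply, conjTranspose_apply, Fintype.sum_prod_type]
    refine (norm_sum_le _ _).trans (Finset.sum_le_sum fun j _ => (norm_sum_le _ _).trans ?_)
    simp only [norm_mul, norm_star, le_refl]
  calc ‖(Xᴴ * Y).trace‖ ^ 2 ≤ (∑ p : n × m, ‖X p.2 p.1‖ * ‖Y p.2 p.1‖) ^ 2 := by gcongr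
    _ ≤ (∑ p : n × m, ‖X p.2 p.1‖ ^ 2) * ∑ p : n × m, ‖Y p.2 p.1‖ ^ 2 :=
      Finset.sum_mul_sq_le_sq_mul_sq _ _ _
    _ = (‖X‖ * ‖Y‖) ^ 2 := by
      rw [mul_pow, frobenius_norm_sq, frobenius_norm_sq, Fintype.sum_prod_type_right,
        Fintype.sum_prod_type_right]

lemma frobenius_norm_sub_sq (X Y : Matrix m n ℂ) :
    ‖X - Y‖ ^ 2 = ‖X‖ ^ 2 + ‖Y‖ ^ 2 - 2 * (Xᴴ * Y).trace.re := by
  have swap : (Yᴴ * X).trace.re = (Xᴴ * Y).trace.re := by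
    rw [← conjTranspose_conjTranspose X, ← conjTranspose_mul, trace_conjTranspose,
      conjTranspose_conjTranspose, Complex.star_def, Complex.conj_re]
  rw [← re_trace_conjTranspose_mul_self, conjTranspose_sub, Matrix.sub_mul, Matrix.mul_sub,
    Matrix.mul_sub]
  simp only [trace_sub, Complex.sub_re, swap, re_trace_conjTranspose_mul_self]
  ring

lemma norm_mul_conjTranspose_self (X : Matrix m n ℂ) : ‖X * Xᴴ‖ = ‖Xᴴ * X‖ := by
  refine (sq_eq_sq₀ (norm_nonneg _) (norm_nonneg _)).1 ?_
  rw [← re_trace_conjTranspose_mul_self, ← re_trace_conjTranspose_mul_self, conjTranspose_mul,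
    conjTranspose_mul, conjTranspose_conjTranspose, Matrix.mul_assoc, trace_mul_comm X]
  simp only [Matrix.mul_assoc]

lemma norm_sq_trace_le_card_mul (X : Matrix n n ℂ) :
    ‖X.trace‖ ^ 2 ≤ Fintype.card n * ‖X‖ ^ 2 := by
  have norm_le : ‖X.trace‖ ≤ ∑ i, ‖X i i‖ := norm_sum_le _ _
  calc ‖X.trace‖ ^ 2 ≤ (∑ i, ‖X i i‖) ^ 2 := by gcongr
    _ ≤ Fintype.card n * ∑ i, ‖X i i‖ ^ 2 := sq_sum_le_card_mul_sum_sq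
    _ ≤ Fintype.card n * ‖X‖ ^ 2 := by
      rw [frobenius_norm_sq]
      gcongr with i
      exact Finset.single_le_sum (f := fun j => ‖X i j‖ ^ 2) (fun _ _ => sq_nonneg _)
        (Finset.mem_univ i)

lemma norm_pow_four_le_card_mul (X : Matrix m n ℂ) :
    ‖X‖ ^ 4 ≤ Fintype.card m * ‖X * Xᴴ‖ ^ 2 := by
  have h := norm_sq_trace_le_card_mul (X * Xᴴ)
  rw [trace_mul_comm, trace_conjTranspose_mul_self, Complex.norm_real, norm_pow, norm_norm,
    ← pow_mul] at h
  exact h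

end FrobeniusNorm

section Contraction

/-- `Z` has operator norm at most one, phrased as `ZᴴZ ≤ 1` so that it can be used next to the
Frobenius norm. -/
def IsContraction {m n : Type*} [Fintype m] [DecidableEq n] (Z : Matrix m n ℂ) : Prop :=
  (1 - Zᴴ * Z).PosSemidef

namespace IsContraction

variable {l m n p : Type*} [Fintype l] [Fintype m]

lemma of_conjTranspose_mul_self [DecidableEq n] {Z : Matrix m n ℂ} (h : Zᴴ * Z = 1) :
    IsContraction Z := by
  rw [IsContraction, h, sub_self]
  exact PosSemidef.zero

lemma one [DecidableEq m] : IsContraction (1 : Matrix m m ℂ) :=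
  of_conjTranspose_mul_self (by rw [conjTranspose_one, Matrix.one_mul])

lemma mul [Finite n] [DecidableEq m] [DecidableEq n] {Z : Matrix l m ℂ} {Y : Matrix m n ℂ}
    (hZ : IsContraction Z) (hY : IsContraction Y) : IsContraction (Z * Y) := by
  rw [IsContraction]
  convert PosSemidef.add hY (PosSemidef.conjTranspose_mul_mul_same hZ Y) using 1
  simp only [conjTranspose_mul, Matrix.mul_sub, Matrix.sub_mul, Matrix.mul_one, Matrix.mul_assoc]
  abel

lemma kronecker [Finite n] [Finite p] [DecidableEq n] [DecidableEq p]
    {Z : Matrix l n ℂ} {Y : Matrix m p ℂ} (hZ : IsContraction Z) (hY : IsContraction Y) :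
    IsContraction (Z ⊗ₖ Y) := by
  have defect : 1 - (Z ⊗ₖ Y)ᴴ * (Z ⊗ₖ Y) =
      (1 - Zᴴ * Z) ⊗ₖ 1 + (Zᴴ * Z) ⊗ₖ (1 - Yᴴ * Y) := by
    rw [conjTranspose_kronecker, ← mul_kronecker_mul, ← one_kronecker_one]
    ext i j
    simp only [Matrix.sub_apply, Matrix.add_apply, kroneckerMap_apply]
    ring
  rw [IsContraction, defect]
  exact (PosSemidef.kronecker hZ PosSemidef.one).add
    (PosSemidef.kronecker (posSemidef_conjTranspose_mul_self Z) hY)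

lemma exists_isometry [Finite n] [DecidableEq n] {c w : Type*} [Fintype c] [Fintype w]
    [Nonempty c] {Z : Matrix (c × w) n ℂ} (h : IsContraction Z) :
    ∃ (d : ℕ) (emb : w ↪ Fin d) (E : Matrix (c × Fin d) n ℂ),
      Eᴴ * E = 1 ∧ ∀ x y z, E (x, emb y) z = Z (x, y) z := by
  classical
  have := Fintype.ofFinite n
  obtain ⟨B, hB⟩ := CStarAlgebra.nonneg_iff_eq_star_mul_self.1 (PosSemidef.nonneg h)
  obtain ⟨c₀⟩ := ‹Nonempty c›
  let e := Fintype.equivFin (w ⊕ n)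
  let F : w ⊕ n → Matrix c n ℂ :=
    Sum.elim (fun y => Z.submatrix (·, y) id) (fun j => of fun x z => if x = c₀ then B j z else 0)
  let E : Matrix (c × Fin (Fintype.card (w ⊕ n))) n ℂ := of fun p z => F (e.symm p.2) p.1 z
  have gram : Eᴴ * E = ∑ s, (F s)ᴴ * F s := by
    ext z z'
    simp only [E, mul_apply, Matrix.sum_apply, Fintype.sum_prod_type_right, conjTranspose_apply,
      of_apply]
    exact e.symm.sum_comp fun s => ∑ x, star (F s x z) * F s x z'
  have one_eq : 1 = Zᴴ * Z + Bᴴ * B := by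
    rw [← star_eq_conjTranspose B, ← hB, add_sub_cancel]
  refine ⟨_, Function.Embedding.inl.trans e.toEmbedding, E, ?_, fun x y z => by simp [E, F]⟩
  rw [gram, one_eq, Fintype.sum_sum_type]
  ext z z'
  simp [F, mul_apply, Matrix.sum_apply, Fintype.sum_prod_type_right, apply_ite]

variable [Fintype n]

lemma conjTranspose [DecidableEq m] [DecidableEq n] {Z : Matrix m n ℂ} (h : IsContraction Z) :
    IsContraction Zᴴ := by
  -- `1 - ZZᴴ = (1 - ZZᴴ)² + Z (1 - ZᴴZ) Zᴴ`
  rw [IsContraction]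
  convert (posSemidef_conjTranspose_mul_self (1 - Z * Zᴴ)).add
    (PosSemidef.mul_mul_conjTranspose_same h Z) using 1
  simp only [conjTranspose_sub, conjTranspose_one, conjTranspose_mul, conjTranspose_conjTranspose,
    Matrix.mul_sub, Matrix.sub_mul, Matrix.mul_one, Matrix.one_mul, Matrix.mul_assoc]
  abel

lemma of_mul_conjTranspose_self [DecidableEq m] [DecidableEq n] {Z : Matrix m n ℂ}
    (h : Z * Zᴴ = 1) : IsContraction Z := by
  have adjoint : IsContraction Zᴴ :=
    of_conjTranspose_mul_self (by rwa [conjTranspose_conjTranspose])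
  simpa only [conjTranspose_conjTranspose] using adjoint.conjTranspose

lemma transpose [DecidableEq m] [DecidableEq n] {Z : Matrix m n ℂ} (h : IsContraction Z) :
    IsContraction Zᵀ := by
  have gram : Zᵀᴴ * Zᵀ = (Z * Zᴴ)ᵀ := (transpose_mul _ _).symm
  rw [IsContraction, gram, ← transpose_one, ← transpose_sub]
  simpa only [IsContraction, conjTranspose_conjTranspose] using PosSemidef.transpose h.conjTranspose

lemma norm_mul_le [Fintype p] [DecidableEq n] {Z : Matrix m n ℂ} (h : IsContraction Z)
    (X : Matrix n p ℂ) : ‖Z * X‖ ≤ ‖X‖ := by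
  have trace_nonneg := (PosSemidef.conjTranspose_mul_mul_same h X).trace_nonneg
  have defect : Xᴴ * (1 - Zᴴ * Z) * X = Xᴴ * X - (Z * X)ᴴ * (Z * X) := by
    simp only [conjTranspose_mul, Matrix.mul_sub, Matrix.sub_mul, Matrix.mul_one, Matrix.mul_assoc]
  rw [defect, trace_sub, trace_conjTranspose_mul_self, trace_conjTranspose_mul_self,
    ← Complex.ofReal_sub, Complex.zero_le_real, sub_nonneg] at trace_nonneg
  exact (sq_le_sq₀ (norm_nonneg _) (norm_nonneg _)).1 trace_nonneg

lemma norm_mul_le' [Fintype p] [DecidableEq n] {Z : Matrix m n ℂ}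
    (h : IsContraction Z) (X : Matrix p m ℂ) : ‖X * Z‖ ≤ ‖X‖ := by
  classical
  simpa only [← conjTranspose_mul, frobenius_norm_conjTranspose] using
    h.conjTranspose.norm_mul_le Xᴴ

lemma norm_sub_mul_sq_le [Fintype p] [DecidableEq n] {P : Matrix m n ℂ}
    (h : IsContraction P) (M : Matrix p m ℂ) :
    ‖M - M * (P * Pᴴ)‖ ^ 2 ≤ ‖M‖ ^ 2 - ‖M * P‖ ^ 2 := by
  classical
  have cross : (Mᴴ * (M * (P * Pᴴ))).trace.re = ‖M * P‖ ^ 2 := by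
    rw [← re_trace_conjTranspose_mul_self, conjTranspose_mul, Matrix.mul_assoc,
      trace_mul_comm Pᴴ]
    simp only [Matrix.mul_assoc]
  have shrink : ‖M * (P * Pᴴ)‖ ≤ ‖M * P‖ := by
    rw [← Matrix.mul_assoc]
    exact h.conjTranspose.norm_mul_le' _
  have shrink_sq := pow_le_pow_left₀ (norm_nonneg _) shrink 2
  rw [frobenius_norm_sub_sq, cross]
  linarith

end IsContraction

end Contraction

section FunctionalCalculus

variable {m n k : Type*} [Fintype m] [Fintype n] [Fintype k] [DecidableEq n]

lemma cfc_mul_cfc (f g : ℝ → ℝ) (A : Matrix n n ℂ) :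
    cfc f A * cfc g A = cfc (fun x => f x * g x) A :=
  (cfc_mul f g A (finite_real_spectrum.continuousOn f) (finite_real_spectrum.continuousOn g)).symm

lemma conjTranspose_cfc (f : ℝ → ℝ) (A : Matrix n n ℂ) : (cfc f A)ᴴ = cfc f A :=
  (cfc_predicate f A : IsSelfAdjoint _)

lemma posSemidef_cfc {f : ℝ → ℝ} (hf : ∀ x, 0 ≤ f x) (A : Matrix n n ℂ) : (cfc f A).PosSemidef :=
  nonneg_iff_posSemidef.1 (cfc_nonneg fun x _ => hf x)

lemma isContraction_cfc {f : ℝ → ℝ} (hf : ∀ x, |f x| ≤ 1) (A : Matrix n n ℂ) :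
    IsContraction (cfc f A) := by
  rw [IsContraction, conjTranspose_cfc, cfc_mul_cfc]
  refine le_iff.1 (cfc_le_one _ _ fun x _ => ?_)
  rw [← sq, sq_le_one_iff_abs_le_one]
  exact hf x

lemma trace_mul_nonneg_of_posSemidef {n : Type*} [Fintype n] {S T : Matrix n n ℂ}
    (hS : S.PosSemidef) (hT : T.PosSemidef) : 0 ≤ (S * T).trace := by
  classical
  obtain ⟨B, rfl⟩ := CStarAlgebra.nonneg_iff_eq_star_mul_self.1 hS.nonneg
  rw [Matrix.mul_assoc, trace_mul_comm]
  exact (hT.mul_mul_conjTranspose_same B).trace_nonneg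

lemma exists_polar_decomposition (N : Matrix m n ℂ) :
    ∃ (S : Matrix n n ℂ) (V : Matrix m n ℂ),
      S.PosSemidef ∧ S * S = Nᴴ * N ∧ IsContraction V ∧ Vᴴ * N = S := by
  set G := Nᴴ * N with hG
  have G_nonneg : 0 ≤ G := (posSemidef_conjTranspose_mul_self N).nonneg
  have spectrum_nonneg : ∀ x ∈ spectrum ℝ G, 0 ≤ x :=
    fun x hx => spectrum_nonneg_of_nonneg G_nonneg hx
  have G_eq : G = cfc id G := (cfc_id ℝ G).symm
  have inv_mul_self : cfc (fun x => (√x)⁻¹) G * G = cfc Real.sqrt G := by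
    nth_rw 2 [G_eq]
    rw [cfc_mul_cfc]
    refine cfc_congr fun x hx => ?_
    rcases eq_or_ne (√x) 0 with h | h
    · simp [h]
    · change (√x)⁻¹ * x = √x
      nth_rw 2 [← Real.mul_self_sqrt (spectrum_nonneg x hx)]
      rw [inv_mul_cancel_left₀ h]
  refine ⟨cfc Real.sqrt G, N * cfc (fun x => (√x)⁻¹) G, posSemidef_cfc Real.sqrt_nonneg G, ?_, ?_,
    ?_⟩
  · nth_rw 3 [G_eq]
    rw [cfc_mul_cfc]
    exact cfc_congr fun x hx => Real.mul_self_sqrt (spectrum_nonneg x hx)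
  · rw [IsContraction, conjTranspose_mul, Matrix.mul_assoc, ← Matrix.mul_assoc Nᴴ, ← hG,
      ← Matrix.mul_assoc, conjTranspose_cfc, inv_mul_self, cfc_mul_cfc]
    exact le_iff.1 (cfc_le_one _ _ fun x _ => mul_inv_le_one)
  · rw [conjTranspose_mul, conjTranspose_cfc, Matrix.mul_assoc, ← hG, inv_mul_self]

lemma posSemidef_cfc_abs_add_smul {Δ : Matrix n n ℂ} (hΔ : IsSelfAdjoint Δ) {c : ℝ}
    (hc : |c| ≤ 1) : (cfc (fun x : ℝ => |x|) Δ + c • Δ).PosSemidef := by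
  rw [← cfc_const_mul_id c Δ, ← cfc_add Δ (fun x : ℝ => |x|) (fun x => c * x)
    (finite_real_spectrum.continuousOn _) (finite_real_spectrum.continuousOn _)]
  refine posSemidef_cfc (fun x => ?_) Δ
  have h : |c * x| ≤ |x| := by
    rw [abs_mul]
    exact mul_le_of_le_one_left (abs_nonneg x) hc
  linarith [neg_abs_le (c * x)]

lemma exists_sign_decomposition {Δ : Matrix n n ℂ} (hΔ : IsSelfAdjoint Δ) :
    ∃ J A : Matrix n n ℂ, IsContraction J ∧ J * Δ = A ∧ Δ * J = A ∧
      (A + Δ).PosSemidef ∧ (A - Δ).PosSemidef := by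
  let sgn : ℝ → ℝ := fun x => SignType.sign x
  have Δ_eq : cfc id Δ = Δ := cfc_id ℝ Δ
  refine ⟨cfc sgn Δ, cfc (fun x : ℝ => |x|) Δ, isContraction_cfc (fun x => ?_) Δ, ?_, ?_, ?_, ?_⟩
  · rcases lt_trichotomy x 0 with h | h | h <;> simp [sgn, h]
  · conv_lhs => enter [2]; rw [← Δ_eq]
    rw [cfc_mul_cfc]
    exact cfc_congr fun x _ => sign_mul_self x
  · conv_lhs => enter [1]; rw [← Δ_eq]
    rw [cfc_mul_cfc]
    exact cfc_congr fun x _ => self_mul_sign x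
  · simpa only [one_smul] using posSemidef_cfc_abs_add_smul hΔ (c := 1) (by simp)
  · simpa only [neg_one_smul, ← sub_eq_add_neg] using
      posSemidef_cfc_abs_add_smul hΔ (c := -1) (by simp)

/-- The **Powers–Størmer inequality**, with the trace norm bounded by the Frobenius norm. -/
lemma norm_sub_sq_le_sqrt_card_mul {S T : Matrix n n ℂ} (hS : S.PosSemidef) (hT : T.PosSemidef) :
    ‖S - T‖ ^ 2 ≤ √(Fintype.card n) * ‖S * S - T * T‖ := by
  obtain ⟨Δ, hΔ⟩ : ∃ Δ, S - T = Δ := ⟨_, rfl⟩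
  have Δ_herm : IsSelfAdjoint Δ := hΔ ▸ hS.isHermitian.sub hT.isHermitian
  obtain ⟨J, A, hJ, J_mul, mul_J, A_add, A_sub⟩ := exists_sign_decomposition Δ_herm
  have trace_T := (Complex.le_def.1 (trace_mul_nonneg_of_posSemidef A_add hT)).1
  have trace_S := (Complex.le_def.1 (trace_mul_nonneg_of_posSemidef A_sub hS)).1
  have norm_Δ : (Δ * S).trace.re - (Δ * T).trace.re = ‖Δ‖ ^ 2 := by
    rw [← re_trace_conjTranspose_mul_self, ← star_eq_conjTranspose, Δ_herm.star_eq,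
      ← Complex.sub_re, ← trace_sub, ← Matrix.mul_sub, hΔ]
  have anticommutator : (S * S - T * T) + (S * S - T * T) = Δ * (S + T) + (S + T) * Δ := by
    rw [← hΔ]
    simp only [Matrix.mul_add, Matrix.add_mul, Matrix.mul_sub, Matrix.sub_mul]
    abel
  have sign_trace : (J * (S * S - T * T)).trace = (A * (S + T)).trace := by
    rw [← mul_right_inj' (two_ne_zero' ℂ), two_mul, two_mul, ← trace_add, ← Matrix.mul_add,
      anticommutator, Matrix.mul_add, trace_add, ← Matrix.mul_assoc, J_mul, trace_mul_comm J,
      Matrix.mul_assoc, mul_J, trace_mul_comm _ A]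
  have norm_J : ‖Jᴴ‖ ≤ √(Fintype.card n) := by
    have norm_one : ‖(1 : Matrix n n ℂ)‖ = √(Fintype.card n) := by
      simpa using congrArg NNReal.toReal (frobenius_nnnorm_one (n := n) (α := ℂ))
    simpa [norm_one] using hJ.norm_mul_le (1 : Matrix n n ℂ)
  have sign_le := (Complex.re_le_norm _).trans (norm_trace_conjTranspose_mul_le Jᴴ (S * S - T * T))
  rw [conjTranspose_conjTranspose, sign_trace] at sign_le
  simp only [Matrix.add_mul, Matrix.sub_mul, Matrix.mul_add, trace_add, trace_sub, Complex.add_re,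
    Complex.sub_re, Complex.zero_re] at trace_T trace_S sign_le
  rw [hΔ]
  calc ‖Δ‖ ^ 2 ≤ ‖Jᴴ‖ * ‖S * S - T * T‖ := by linarith
    _ ≤ √(Fintype.card n) * ‖S * S - T * T‖ := by gcongr

/-- **Uhlmann's theorem** for purifications `M` and `N`, with the fidelity of the reduced states
bounded below through the Powers–Størmer inequality. -/
lemma exists_isContraction_le_re_trace [DecidableEq k] (M : Matrix m n ℂ)
    (N : Matrix k n ℂ) :
    ∃ Z : Matrix m k ℂ, IsContraction Z ∧
      (‖M‖ ^ 2 + ‖N‖ ^ 2 - √(Fintype.card n) * ‖Nᴴ * N - Mᴴ * M‖) / 2 ≤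
        (Mᴴ * Z * N).trace.re := by
  classical
  obtain ⟨S, U, hS, S_sq, hU, hUM⟩ := exists_polar_decomposition M
  obtain ⟨T, V, hT, T_sq, hV, hVN⟩ := exists_polar_decomposition N
  refine ⟨U * Vᴴ, hU.mul hV.conjTranspose, ?_⟩
  have overlap : Mᴴ * (U * Vᴴ) * N = Sᴴ * T := by
    rw [← hUM, ← hVN, conjTranspose_mul, conjTranspose_conjTranspose]
    simp only [Matrix.mul_assoc]
  have norm_S : ‖S‖ ^ 2 = ‖M‖ ^ 2 := by
    rw [← re_trace_conjTranspose_mul_self, hS.isHermitian.eq, S_sq, re_trace_conjTranspose_mul_self]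
  have norm_T : ‖T‖ ^ 2 = ‖N‖ ^ 2 := by
    rw [← re_trace_conjTranspose_mul_self, hT.isHermitian.eq, T_sq, re_trace_conjTranspose_mul_self]
  have stormer := norm_sub_sq_le_sqrt_card_mul hS hT
  rw [frobenius_norm_sub_sq, norm_S, norm_T, S_sq, T_sq, norm_sub_rev (Mᴴ * M)] at stormer
  rw [overlap]
  linarith

end FunctionalCalculus

section RandomPhases

lemma sum_norm_sq_sum_mul_addChar {G ι : Type*} [AddCommGroup G] [Fintype G] [Fintype ι]
    [DecidableEq (AddChar G ℂ)] (χ : ι → AddChar G ℂ) (c : ι → ℂ) :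
    ((∑ g, ‖∑ i, c i * χ i g‖ ^ 2 : ℝ) : ℂ) =
      Fintype.card G * ∑ i, ∑ j, if χ i = χ j then c i * star (c j) else 0 := by
  have orthogonality : ∀ i j, ∑ g, χ i g * star (χ j g) =
      if χ i = χ j then (Fintype.card G : ℂ) else 0 := fun i j => by
    have h := AddChar.sum_eq_ite (χ i - χ j)
    simp only [AddChar.sub_apply', sub_eq_zero, div_eq_mul_inv, ← AddChar.map_neg_eq_inv,
      AddChar.map_neg_eq_conj] at h
    exact h
  have expand : ∀ g, ((‖∑ i, c i * χ i g‖ ^ 2 : ℝ) : ℂ) =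
      ∑ i, ∑ j, c i * star (c j) * (χ i g * star (χ j g)) := fun g => by
    rw [Complex.ofReal_pow, ← Complex.mul_conj', map_sum, Finset.sum_mul_sum]
    refine Finset.sum_congr rfl fun i _ => Finset.sum_congr rfl fun j _ => ?_
    rw [map_mul, Complex.star_def]
    ring
  rw [Complex.ofReal_sum, Finset.sum_congr rfl fun g _ => expand g, Finset.sum_comm, Finset.mul_sum]
  refine Finset.sum_congr rfl fun i _ => ?_
  rw [Finset.sum_comm, Finset.mul_sum]
  refine Finset.sum_congr rfl fun j _ => ?_
  rw [← Finset.mul_sum, orthogonality]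
  split_ifs <;> ring

variable {α : Type*}

/-- The phases of a random diagonal unitary. Third roots of unity are the smallest ones for which
`phase e i * star (phase e j)` and its conjugate are uncorrelated for `i ≠ j`. -/
noncomputable def phase (e : α → ZMod 3) (i : α) : ℂ := ZMod.stdAddChar (e i)

/-- The character `e ↦ phase e i * star (phase e j)`. -/
noncomputable def phaseDiff (p : α × α) : AddChar (α → ZMod 3) ℂ :=
  ZMod.stdAddChar.compAddMonoidHom
    (Pi.evalAddMonoidHom (fun _ => ZMod 3) p.1 - Pi.evalAddMonoidHom (fun _ => ZMod 3) p.2)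

lemma phaseDiff_apply (p : α × α) (e : α → ZMod 3) :
    phaseDiff p e = phase e p.1 * star (phase e p.2) := by
  rw [phase, phase, Complex.star_def, ← AddChar.map_neg_eq_conj, ← AddChar.map_add_eq_mul,
    ← sub_eq_add_neg]
  rfl

lemma phaseDiff_eq_iff (p q : α × α) :
    phaseDiff p = phaseDiff q ↔ p = q ∨ p.1 = p.2 ∧ q.1 = q.2 := by
  classical
  refine ⟨fun h => ?_, ?_⟩
  · have eval : ∀ k, (if p.1 = k then 1 else 0) - (if p.2 = k then 1 else 0) =
        ((if q.1 = k then 1 else 0) - (if q.2 = k then 1 else 0) : ZMod 3) := fun k => by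
      have h_single := ZMod.injective_stdAddChar (DFunLike.congr_fun h (Pi.single k 1))
      simpa [Pi.single_apply] using h_single
    by_cases hp : p.1 = p.2
    · refine Or.inr ⟨hp, by_contra fun hq => ?_⟩
      simpa [hp, Ne.symm hq] using eval q.1
    · have h₁ : q.1 = p.1 := by_contra fun hq => by
        have := eval p.1
        simp only [if_true, if_neg hq, if_neg (Ne.symm hp)] at this
        split_ifs at this <;> revert this <;> decide
      have h₂ : q.2 = p.2 := by_contra fun hq => by
        have := eval p.2
        simp only [if_true, if_neg hq, if_neg hp] at this
        split_ifs at this <;> revert this <;> decide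
      exact Or.inl (Prod.ext h₁.symm h₂.symm)
  · rintro (rfl | ⟨hp, hq⟩)
    · rfl
    · ext e
      simp [phaseDiff, hp, hq]

variable [Fintype α] [DecidableEq α]

lemma sum_norm_sq_sum_phase_mul (m : α → α → ℂ) :
    ∑ e : α → ZMod 3, ‖∑ i, ∑ j, phase e i * star (phase e j) * m i j‖ ^ 2 =
      Fintype.card (α → ZMod 3) *
        (‖∑ i, m i i‖ ^ 2 + ∑ i, ∑ j, if i = j then 0 else ‖m i j‖ ^ 2) := by
  classical
  have as_characters : ∀ e, ∑ i, ∑ j, phase e i * star (phase e j) * m i j =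
      ∑ p : α × α, m p.1 p.2 * phaseDiff p e := fun e => by
    simp only [Fintype.sum_prod_type, phaseDiff_apply, mul_comm]
  have inner_sum : ∀ p : α × α, (∑ q, if phaseDiff p = phaseDiff q then
      m p.1 p.2 * star (m q.1 q.2) else 0) =
        (if p.1 = p.2 then m p.1 p.2 * star (∑ k, m k k) else 0) +
          ((if p.1 = p.2 then 0 else ‖m p.1 p.2‖ ^ 2 : ℝ) : ℂ) := fun p => by
    by_cases hp : p.1 = p.2
    · have iff_diag : ∀ q : α × α, phaseDiff p = phaseDiff q ↔ q.1 = q.2 := fun q => by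
        rw [phaseDiff_eq_iff]
        exact ⟨by rintro (rfl | h); exacts [hp, h.2], fun h => Or.inr ⟨hp, h⟩⟩
      simp [iff_diag, hp, Fintype.sum_prod_type, Finset.mul_sum]
    · simp [phaseDiff_eq_iff, hp, Complex.mul_conj']
  rw [← Complex.ofReal_inj]
  simp only [as_characters]
  rw [sum_norm_sq_sum_mul_addChar, Finset.sum_congr rfl fun p _ => inner_sum p,
    Finset.sum_add_distrib, Fintype.sum_prod_type, Fintype.sum_prod_type]
  simp only [Finset.sum_ite_eq, Finset.mem_univ, if_true, ← Finset.sum_mul, Complex.star_def,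
    Complex.mul_conj']
  norm_cast

lemma map_apply_eq_sum {m n : Type*} (T : Matrix α α ℂ →ₗ[ℂ] Matrix m n ℂ) (X : Matrix α α ℂ)
    (a : m) (b : n) : T X a b = ∑ i, ∑ j, X i j * T (single i j 1) a b := by
  have single_eq : ∀ i j, single i j (X i j) = X i j • single i j (1 : ℂ) := fun i j => by
    rw [smul_single, smul_eq_mul, mul_one]
  conv_lhs => rw [matrix_eq_sum_single X]
  simp only [map_sum, Matrix.sum_apply, single_eq, map_smul, Matrix.smul_apply, smul_eq_mul]

lemma sum_norm_sq_map_phase_conj {m n : Type*} [Fintype m] [Fintype n]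
    (T : Matrix α α ℂ →ₗ[ℂ] Matrix m n ℂ) (X : Matrix α α ℂ) :
    ∑ e : α → ZMod 3, ‖T (diagonal (phase e) * X * (diagonal (phase e))ᴴ)‖ ^ 2 =
      Fintype.card (α → ZMod 3) * (‖T (diagonal X.diag)‖ ^ 2 +
        ∑ i, ∑ j, if i = j then 0 else ‖X i j‖ ^ 2 * ‖T (single i j 1)‖ ^ 2) := by
  have entry : ∀ e a b, T (diagonal (phase e) * X * (diagonal (phase e))ᴴ) a b =
      ∑ i, ∑ j, phase e i * star (phase e j) * (X i j * T (single i j 1) a b) := fun e a b => by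
    rw [map_apply_eq_sum]
    refine Finset.sum_congr rfl fun i _ => Finset.sum_congr rfl fun j _ => ?_
    rw [diagonal_conjTranspose, mul_diagonal, diagonal_mul, Pi.star_apply]
    ring
  have diag_entry : ∀ a b, ∑ i, X i i * T (single i i 1) a b = T (diagonal X.diag) a b :=
    fun a b => by simp [map_apply_eq_sum T (diagonal _), diagonal_apply]
  have norm_sq : ∀ Y : Matrix m n ℂ, ‖Y‖ ^ 2 = ∑ p : m × n, ‖Y p.1 p.2‖ ^ 2 := fun Y => by
    rw [frobenius_norm_sq, Fintype.sum_prod_type]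
  have off_diag : ∀ i j, (if i = j then 0 else ‖X i j‖ ^ 2 * ‖T (single i j 1)‖ ^ 2) =
      ∑ p : m × n, if i = j then 0 else ‖X i j * T (single i j 1) p.1 p.2‖ ^ 2 := fun i j => by
    split_ifs
    · exact Finset.sum_const_zero.symm
    · simp only [norm_sq, norm_mul, mul_pow, ← Finset.mul_sum]
  simp only [off_diag]
  simp only [norm_sq, entry]
  rw [Finset.sum_comm]
  simp only [sum_norm_sq_sum_phase_mul, diag_entry, ← Finset.mul_sum, Finset.sum_add_distrib]
  rw [Finset.sum_comm, Finset.sum_congr rfl fun i _ => Finset.sum_comm]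

end RandomPhases

section RandomPermutations

variable {α R : Type*} [Fintype α] [DecidableEq α] [CommRing R]

lemma card_mul_sum_perm_apply (f : α → R) (i : α) :
    Fintype.card α * ∑ π : Equiv.Perm α, f (π i) = Fintype.card (Equiv.Perm α) * ∑ x, f x := by
  have shift : ∀ x, ∑ π : Equiv.Perm α, f (π x) = ∑ π : Equiv.Perm α, f (π i) := fun x => by
    rw [← Equiv.sum_comp (Equiv.mulRight (Equiv.swap i x))]
    simp
  calc Fintype.card α * ∑ π : Equiv.Perm α, f (π i) = ∑ x, ∑ π : Equiv.Perm α, f (π x) := by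
        simp [shift]
    _ = ∑ π : Equiv.Perm α, ∑ x, f (π x) := Finset.sum_comm
    _ = Fintype.card (Equiv.Perm α) * ∑ x, f x := by simp [Equiv.sum_comp]

lemma card_mul_sum_perm_apply_apply (f : α → α → R) {i j : α} (hij : i ≠ j) :
    Fintype.card α * (Fintype.card α - 1) * ∑ π : Equiv.Perm α, f (π i) (π j) =
      Fintype.card (Equiv.Perm α) * (∑ x, ∑ y, f x y - ∑ x, f x x) := by
  have shift : ∀ x y, x ≠ y →
      ∑ π : Equiv.Perm α, f (π x) (π y) = ∑ π : Equiv.Perm α, f (π i) (π j) := fun x y hxy => by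
    obtain ⟨g, rfl, rfl⟩ := MulAction.is_two_pretransitive_iff.1
      (Equiv.Perm.isMultiplyPretransitive α 2) hij hxy
    exact Equiv.sum_comp (Equiv.mulRight g) fun π => f (π i) (π j)
  have split : ∀ x y, ∑ π : Equiv.Perm α, f (π x) (π y) =
      (∑ π : Equiv.Perm α, f (π i) (π j)) + if x = y then
        (∑ π : Equiv.Perm α, f (π x) (π x)) - ∑ π : Equiv.Perm α, f (π i) (π j) else 0 :=
    fun x y => by
      split_ifs with h
      · rw [h]
        ring
      · rw [shift x y h, add_zero]
  have diag : ∑ x, ∑ π : Equiv.Perm α, f (π x) (π x) =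
      Fintype.card (Equiv.Perm α) * ∑ x, f x x := by
    rw [Finset.sum_comm, Finset.sum_congr rfl fun π _ => Equiv.sum_comp π fun x => f x x]
    simp
  have total : ∑ x, ∑ y, ∑ π : Equiv.Perm α, f (π x) (π y) =
      Fintype.card (Equiv.Perm α) * ∑ x, ∑ y, f x y := by
    have reindex : ∀ π : Equiv.Perm α, ∑ x, ∑ y, f (π x) (π y) = ∑ x, ∑ y, f x y := fun π => by
      simp only [Equiv.sum_comp π, Equiv.sum_comp π fun x => ∑ y, f x y]
    rw [Finset.sum_congr rfl fun x _ => Finset.sum_comm, Finset.sum_comm]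
    simp [reindex]
  rw [Finset.sum_congr rfl fun x _ => Finset.sum_congr rfl fun y _ => split x y] at total
  simp only [Finset.sum_add_distrib, Finset.sum_ite_eq, Finset.mem_univ, if_true,
    Finset.sum_sub_distrib, Finset.sum_const, Finset.card_univ, nsmul_eq_mul, diag] at total
  linear_combination total

lemma ofReal_norm_sq_sum_smul {ι m n : Type*} [Fintype ι] [Fintype m] [Fintype n] (y : ι → ℂ)
    (K : ι → Matrix m n ℂ) :
    ((‖∑ i, y i • K i‖ ^ 2 : ℝ) : ℂ) = ∑ i, ∑ j, y i * star (y j) * ((K j)ᴴ * K i).trace := by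
  rw [← trace_conjTranspose_mul_self, conjTranspose_sum, Matrix.mul_sum, trace_sum]
  refine Finset.sum_congr rfl fun i _ => ?_
  rw [Matrix.sum_mul, trace_sum]
  refine Finset.sum_congr rfl fun j _ => ?_
  rw [conjTranspose_smul, Matrix.smul_mul, Matrix.mul_smul, trace_smul, trace_smul, smul_eq_mul,
    smul_eq_mul]
  ring

lemma sum_sum_mul_star_mul_add_ite (y : α → ℂ) (u v : ℝ) :
    ∑ i, ∑ j, y i * star (y j) * ((u : ℂ) + if i = j then (v : ℂ) else 0) =
      (u * ‖∑ i, y i‖ ^ 2 + v * ∑ i, ‖y i‖ ^ 2 : ℝ) := by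
  simp only [mul_add, Finset.sum_add_distrib, mul_ite, mul_zero, Finset.sum_ite_eq,
    Finset.mem_univ, if_true, ← Finset.sum_mul, ← Finset.sum_mul_sum, Complex.star_def,
    ← map_sum, Complex.mul_conj']
  push_cast
  ring

lemma sum_perm_norm_sq_sum_smul {m n : Type*} [Fintype m] [Fintype n] (K : α → Matrix m n ℂ)
    (y : α → ℂ) :
    Fintype.card α * (Fintype.card α - 1) * ∑ π : Equiv.Perm α, ‖∑ i, y i • K (π i)‖ ^ 2 =
      Fintype.card (Equiv.Perm α) * ((‖∑ x, K x‖ ^ 2 - ∑ x, ‖K x‖ ^ 2) * ‖∑ i, y i‖ ^ 2 +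
        (Fintype.card α * ∑ x, ‖K x‖ ^ 2 - ‖∑ x, K x‖ ^ 2) * ∑ i, ‖y i‖ ^ 2) := by
  let f : α → α → ℂ := fun x x' => ((K x')ᴴ * K x).trace
  have sum_f_diag : ∑ x, f x x = (∑ x, ‖K x‖ ^ 2 : ℝ) := by
    simp only [f, trace_conjTranspose_mul_self, Complex.ofReal_sum]
  have sum_f : ∑ x, ∑ x', f x x' = (‖∑ x, K x‖ ^ 2 : ℝ) := by
    simpa [f] using (ofReal_norm_sq_sum_smul 1 K).symm
  have pair_average : ∀ i j, Fintype.card α * (Fintype.card α - 1 : ℂ) *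
      ∑ π : Equiv.Perm α, f (π i) (π j) = Fintype.card (Equiv.Perm α) *
        ((‖∑ x, K x‖ ^ 2 - ∑ x, ‖K x‖ ^ 2 : ℝ) + if i = j then
          ((Fintype.card α * ∑ x, ‖K x‖ ^ 2 - ‖∑ x, K x‖ ^ 2 : ℝ) : ℂ) else 0) := fun i j => by
    split_ifs with hij
    · have h := card_mul_sum_perm_apply (fun x => f x x) i
      rw [sum_f_diag] at h
      rw [← hij]
      push_cast at h ⊢
      linear_combination (Fintype.card α - 1 : ℂ) * h
    · rw [card_mul_sum_perm_apply_apply f hij, sum_f, sum_f_diag, Complex.ofReal_sub, add_zero]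
  have expand : ((∑ π : Equiv.Perm α, ‖∑ i, y i • K (π i)‖ ^ 2 : ℝ) : ℂ) =
      ∑ i, ∑ j, y i * star (y j) * ∑ π : Equiv.Perm α, f (π i) (π j) := by
    rw [Complex.ofReal_sum,
      Finset.sum_congr rfl fun π _ => ofReal_norm_sq_sum_smul y fun i => K (π i),
      Finset.sum_comm, Finset.sum_congr rfl fun i _ => Finset.sum_comm]
    simp only [Finset.mul_sum, f]
  rw [← Complex.ofReal_inj, Complex.ofReal_mul, expand,
    Complex.ofReal_mul (Fintype.card (Equiv.Perm α)),
    ← sum_sum_mul_star_mul_add_ite, Finset.mul_sum, Finset.mul_sum]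
  refine Finset.sum_congr rfl fun i _ => ?_
  rw [Finset.mul_sum, Finset.mul_sum]
  refine Finset.sum_congr rfl fun j _ => ?_
  rw [mul_left_comm, mul_left_comm (Complex.ofReal _)]
  push_cast at pair_average ⊢
  rw [pair_average]

end RandomPermutations

section Twirling

variable {α m n : Type*} [Fintype α] [DecidableEq α] [Fintype m] [Fintype n]

lemma sum_perm_norm_sq_map_permute_diagonal (T : Matrix α α ℂ →ₗ[ℂ] Matrix m n ℂ) (y : α → ℂ) :
    Fintype.card α * (Fintype.card α - 1) *
        ∑ π : Equiv.Perm α, ‖T ((diagonal y).submatrix π.symm π.symm)‖ ^ 2 =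
      Fintype.card (Equiv.Perm α) *
        ((‖T 1‖ ^ 2 - ∑ x, ‖T (single x x 1)‖ ^ 2) * ‖∑ i, y i‖ ^ 2 +
          (Fintype.card α * ∑ x, ‖T (single x x 1)‖ ^ 2 - ‖T 1‖ ^ 2) * ∑ i, ‖y i‖ ^ 2) := by
  have map_diagonal : ∀ z : α → ℂ, T (diagonal z) = ∑ x, z x • T (single x x 1) := fun z => by
    simp [← map_smul, ← map_sum, smul_single, sum_single_eq_diagonal]
  have permute : ∀ π : Equiv.Perm α, T ((diagonal y).submatrix π.symm π.symm) =
      ∑ i, y i • T (single (π i) (π i) 1) := fun π => by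
    rw [submatrix_diagonal_equiv, map_diagonal, ← Equiv.sum_comp π]
    simp
  have map_one : T 1 = ∑ x, T (single x x 1) := by
    simp [← diagonal_one, map_diagonal]
  simp only [permute, map_one]
  exact sum_perm_norm_sq_sum_smul (fun x => T (single x x 1)) y

/-- Conjugation by random phases and a random permutation of the basis. -/
noncomputable def twirl (π : Equiv.Perm α) (e : α → ZMod 3) (X : Matrix α α ℂ) : Matrix α α ℂ :=
  (diagonal (phase e) * X * (diagonal (phase e))ᴴ).submatrix π.symm π.symm

lemma frobenius_norm_sq_sub_sum_diag (X : Matrix α α ℂ) :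
    ‖X‖ ^ 2 - ∑ i, ‖X i i‖ ^ 2 = ∑ i, ∑ j, if i = j then 0 else ‖X i j‖ ^ 2 := by
  have complement : ∀ i j, (if i = j then 0 else ‖X i j‖ ^ 2) =
      ‖X i j‖ ^ 2 - if i = j then ‖X i j‖ ^ 2 else 0 := fun i j => by split_ifs <;> simp
  simp only [complement, frobenius_norm_sq, Finset.sum_sub_distrib, Finset.sum_ite_eq,
    Finset.mem_univ, if_true]

lemma sum_norm_sq_map_twirl (T : Matrix α α ℂ →ₗ[ℂ] Matrix m n ℂ) (X : Matrix α α ℂ) :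
    Fintype.card α * (Fintype.card α - 1) *
        ∑ π : Equiv.Perm α, ∑ e : α → ZMod 3, ‖T (twirl π e X)‖ ^ 2 =
      Fintype.card (Equiv.Perm α) * Fintype.card (α → ZMod 3) *
        ((‖T 1‖ ^ 2 - ∑ x, ‖T (single x x 1)‖ ^ 2) * ‖X.trace‖ ^ 2 +
          (Fintype.card α * ∑ x, ‖T (single x x 1)‖ ^ 2 - ‖T 1‖ ^ 2) * ∑ i, ‖X i i‖ ^ 2 +
          (∑ x, ∑ y, ‖T (single x y 1)‖ ^ 2 - ∑ x, ‖T (single x x 1)‖ ^ 2) *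
            (‖X‖ ^ 2 - ∑ i, ‖X i i‖ ^ 2)) := by
  have phase_average : ∀ π : Equiv.Perm α, ∑ e : α → ZMod 3, ‖T (twirl π e X)‖ ^ 2 =
      Fintype.card (α → ZMod 3) * (‖T ((diagonal X.diag).submatrix π.symm π.symm)‖ ^ 2 +
        ∑ i, ∑ j, if i = j then 0 else ‖X i j‖ ^ 2 * ‖T (single (π i) (π j) 1)‖ ^ 2) :=
    fun π => by
      simpa [twirl] using sum_norm_sq_map_phase_conj
        (T ∘ₗ (reindexLinearEquiv ℂ ℂ π π).toLinearMap) X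
  have permutation_average : ∀ i j, i ≠ j →
      Fintype.card α * (Fintype.card α - 1) *
          ∑ π : Equiv.Perm α, ‖T (single (π i) (π j) 1)‖ ^ 2 =
        Fintype.card (Equiv.Perm α) *
          (∑ x, ∑ y, ‖T (single x y 1)‖ ^ 2 - ∑ x, ‖T (single x x 1)‖ ^ 2) := fun i j hij =>
    card_mul_sum_perm_apply_apply (fun x y => ‖T (single x y 1)‖ ^ 2) hij
  have off_diagonal_average : Fintype.card α * (Fintype.card α - 1) *
      ∑ π : Equiv.Perm α, ∑ i, ∑ j,
        (if i = j then 0 else ‖X i j‖ ^ 2 * ‖T (single (π i) (π j) 1)‖ ^ 2) =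
      Fintype.card (Equiv.Perm α) *
        ((∑ x, ∑ y, ‖T (single x y 1)‖ ^ 2 - ∑ x, ‖T (single x x 1)‖ ^ 2) *
          (‖X‖ ^ 2 - ∑ i, ‖X i i‖ ^ 2)) := by
    rw [frobenius_norm_sq_sub_sum_diag, Finset.sum_comm,
      Finset.sum_congr rfl fun i _ => Finset.sum_comm]
    simp only [Finset.mul_sum]
    refine Finset.sum_congr rfl fun i _ => Finset.sum_congr rfl fun j _ => ?_
    rw [← Finset.mul_sum]
    split_ifs with hij
    · simp
    · rw [← Finset.mul_sum, mul_left_comm, permutation_average i j hij]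
      ring
  have diagonal_average := sum_perm_norm_sq_map_permute_diagonal T X.diag
  rw [← Matrix.trace] at diagonal_average
  simp only [diag_apply] at diagonal_average
  simp only [phase_average, ← Finset.mul_sum, Finset.sum_add_distrib]
  linear_combination (Fintype.card (α → ZMod 3) : ℝ) * (diagonal_average + off_diagonal_average)

end Twirling

section PartialTrace

variable {γ ω : Type*} [Fintype γ]

/-- The partial trace over the first tensor factor, as a map between spaces of matrices. -/
def partialTrace : Matrix (γ × ω) (γ × ω) ℂ →ₗ[ℂ] Matrix ω ω ℂ where
  toFun X := of fun w w' => ∑ c, X (c, w) (c, w')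
  map_add' X Y := by ext; simp [Finset.sum_add_distrib]
  map_smul' r X := by ext; simp [Finset.mul_sum]

lemma partialTrace_apply (X : Matrix (γ × ω) (γ × ω) ℂ) (w w' : ω) :
    partialTrace X w w' = ∑ c, X (c, w) (c, w') := rfl

lemma partialTrace_one [DecidableEq γ] [DecidableEq ω] :
    partialTrace (1 : Matrix (γ × ω) (γ × ω) ℂ) = (Fintype.card γ : ℂ) • 1 := by
  ext w w'
  by_cases h : w = w' <;> simp [partialTrace_apply, h]

variable [Fintype ω]

lemma norm_partialTrace_sq_le (X : Matrix (γ × ω) (γ × ω) ℂ) :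
    ‖partialTrace X‖ ^ 2 ≤ Fintype.card γ * ‖X‖ ^ 2 := by
  have entry : ∀ w w', ‖partialTrace X w w'‖ ^ 2 ≤
      Fintype.card γ * ∑ c, ‖X (c, w) (c, w')‖ ^ 2 := fun w w' =>
    (pow_le_pow_left₀ (norm_nonneg _) (norm_sum_le _ _) 2).trans sq_sum_le_card_mul_sum_sq
  have block : ∀ c w, ∑ w', ‖X (c, w) (c, w')‖ ^ 2 ≤ ∑ q, ‖X (c, w) q‖ ^ 2 := fun c w => by
    rw [Fintype.sum_prod_type]
    exact Finset.single_le_sum (f := fun c' => ∑ w', ‖X (c, w) (c', w')‖ ^ 2)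
      (fun _ _ => by positivity) (Finset.mem_univ c)
  calc ‖partialTrace X‖ ^ 2
      ≤ ∑ w, ∑ w', Fintype.card γ * ∑ c, ‖X (c, w) (c, w')‖ ^ 2 := by
        rw [frobenius_norm_sq]
        gcongr
        exact entry _ _
    _ = Fintype.card γ * ∑ c, ∑ w, ∑ w', ‖X (c, w) (c, w')‖ ^ 2 := by
        simp only [← Finset.mul_sum]
        rw [Finset.sum_congr rfl fun w _ => Finset.sum_comm, Finset.sum_comm]
    _ ≤ Fintype.card γ * ‖X‖ ^ 2 := by
        rw [frobenius_norm_sq, Fintype.sum_prod_type]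
        gcongr
        exact block _ _

lemma norm_smul_one_sq [DecidableEq ω] (z : ℂ) :
    ‖z • (1 : Matrix ω ω ℂ)‖ ^ 2 = ‖z‖ ^ 2 * Fintype.card ω := by
  rw [← diagonal_one, ← diagonal_smul, frobenius_norm_sq]
  simp [diagonal_apply, apply_ite, mul_comm]

lemma norm_partialTrace_single_sq [DecidableEq γ] [DecidableEq ω] (i j : γ × ω) :
    ‖partialTrace (single i j (1 : ℂ))‖ ^ 2 = if i.1 = j.1 then 1 else 0 := by
  have h : partialTrace (single i j (1 : ℂ)) = if i.1 = j.1 then single i.2 j.2 1 else 0 := by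
    ext w w'
    simp only [partialTrace_apply, single_apply, Prod.ext_iff, ite_and, Finset.sum_ite_eq,
      Finset.mem_univ, if_true, eq_comm (a := j.1)]
    split_ifs <;> simp_all
  rw [h]
  split_ifs <;> simp [frobenius_norm_sq, single_apply, ite_and, apply_ite]

lemma sum_norm_sq_partialTrace_single [DecidableEq γ] [DecidableEq ω] :
    ∑ i : γ × ω, ∑ j, (if i = j then 0 else ‖partialTrace (single i j (1 : ℂ))‖ ^ 2) =
      Fintype.card γ * Fintype.card ω * (Fintype.card ω - 1) := by
  have summand : ∀ i j : γ × ω, (if i = j then 0 else ‖partialTrace (single i j (1 : ℂ))‖ ^ 2) =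
      (if i.1 = j.1 then 1 else 0) - if i = j then 1 else 0 := fun i j => by
    rw [norm_partialTrace_single_sq]
    by_cases h : i = j <;> simp [h]
  have per_row : ∀ c : γ, ∑ j : γ × ω, (if c = j.1 then 1 else 0 : ℝ) = Fintype.card ω :=
    fun c => by
      rw [Fintype.sum_prod_type_right]
      simp
  simp only [summand, Finset.sum_sub_distrib, per_row, Finset.sum_ite_eq, Finset.mem_univ, if_true,
    Finset.sum_const, Finset.card_univ, Fintype.card_prod, nsmul_eq_mul]
  push_cast
  ring

/-- The marginal on the second factor of `F * X * Fᴴ`, as a function of `X`. -/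
def conjPartialTrace (F : Matrix (γ × ω) (γ × ω) ℂ) :
    Matrix (γ × ω) (γ × ω) ℂ →ₗ[ℂ] Matrix ω ω ℂ :=
  partialTrace ∘ₗ LinearMap.mulRight ℂ Fᴴ ∘ₗ LinearMap.mulLeft ℂ F

lemma conjPartialTrace_apply (F X : Matrix (γ × ω) (γ × ω) ℂ) :
    conjPartialTrace F X = partialTrace (F * X * Fᴴ) := rfl

variable [DecidableEq γ] [DecidableEq ω]

lemma norm_conjPartialTrace_one_sq {F : Matrix (γ × ω) (γ × ω) ℂ} (hF : F * Fᴴ = 1) :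
    ‖conjPartialTrace F 1‖ ^ 2 = Fintype.card γ ^ 2 * Fintype.card ω := by
  rw [conjPartialTrace_apply, mul_one, hF, partialTrace_one, norm_smul_one_sq, Complex.norm_natCast]

lemma sum_norm_sq_conjPartialTrace_single {F : Matrix (γ × ω) (γ × ω) ℂ} (hF : F * Fᴴ = 1) :
    ∑ x, ∑ y, ‖conjPartialTrace F (single x y 1)‖ ^ 2 = Fintype.card γ * Fintype.card ω ^ 2 := by
  let B : ω → Matrix (γ × ω) γ ℂ := fun w => of fun x c => F (c, w) x
  have isometry : ∀ w, (B w)ᴴ * B w = 1 := fun w => by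
    ext c c'
    have h := congrFun₂ hF (c', w) (c, w)
    simpa [Matrix.mul_apply, Matrix.one_apply, B, mul_comm, eq_comm] using h
  have entry : ∀ x y w w', conjPartialTrace F (single x y 1) w w' = (B w * (B w')ᴴ) x y :=
    fun x y w w' => by
      simp [conjPartialTrace_apply, partialTrace_apply, Matrix.mul_apply, single_apply, B, ite_and]
  have norm_sq : ∀ w w', ‖B w * (B w')ᴴ‖ ^ 2 = Fintype.card γ := fun w w' => by
    rw [← re_trace_conjTranspose_mul_self, conjTranspose_mul, conjTranspose_conjTranspose,
      Matrix.mul_assoc, ← Matrix.mul_assoc (B w)ᴴ, isometry, Matrix.one_mul, trace_mul_comm,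
      isometry, trace_one, Complex.natCast_re]
  have sum_entries : ∑ x, ∑ y, ‖conjPartialTrace F (single x y 1)‖ ^ 2 =
      ∑ w, ∑ w', ‖B w * (B w')ᴴ‖ ^ 2 := by
    simp only [frobenius_norm_sq, entry]
    rw [Finset.sum_congr rfl fun x _ => Finset.sum_comm, Finset.sum_comm]
    refine Finset.sum_congr rfl fun w _ => ?_
    rw [Finset.sum_congr rfl fun x _ => Finset.sum_comm, Finset.sum_comm]
  rw [sum_entries]
  simp only [norm_sq, Finset.sum_const, Finset.card_univ, nsmul_eq_mul]
  ring

lemma sum_norm_sq_conjPartialTrace_flat {V : Matrix (γ × ω) (γ × ω) ℂ}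
    (hV : ∀ i j, ‖V i j‖ ^ 2 = 1 / Fintype.card (γ × ω)) (x : γ × ω) :
    ∑ θ : γ × ω → ZMod 3, ‖conjPartialTrace (diagonal (phase θ) * V) (single x x 1)‖ ^ 2 =
      Fintype.card (γ × ω → ZMod 3) * ((Fintype.card γ + Fintype.card ω - 1) /
        Fintype.card (γ × ω)) := by
  set d : ℝ := (Fintype.card (γ × ω) : ℝ) with hd
  let X := V * single x x 1 * Vᴴ
  have entry : ∀ i j, X i j = V i x * star (V j x) := fun i j => by
    simp [X, Matrix.mul_apply, single_apply, ite_and]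
  have norm_entry_sq : ∀ i j, ‖X i j‖ ^ 2 = (1 / d) ^ 2 := fun i j => by
    rw [entry, norm_mul, norm_star, mul_pow, hV, hV, sq]
  have diagonal_part : ‖partialTrace (diagonal X.diag)‖ ^ 2 =
      (Fintype.card γ / d) ^ 2 * Fintype.card ω := by
    have h : diagonal X.diag = ((1 / d : ℝ) : ℂ) • 1 := by
      rw [← diagonal_one, ← diagonal_smul]
      refine congrArg diagonal (funext fun i => ?_)
      rw [diag_apply, entry, Complex.star_def, Complex.mul_conj', ← hV i x]
      simp
    rw [h, map_smul, partialTrace_one, smul_smul, norm_smul_one_sq]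
    simp [hd, div_eq_inv_mul]
  have off_diagonal_part :
      ∑ i, ∑ j, (if i = j then 0 else ‖X i j‖ ^ 2 * ‖partialTrace (single i j 1)‖ ^ 2) =
        (1 / d) ^ 2 * (Fintype.card γ * Fintype.card ω * (Fintype.card ω - 1)) := by
    rw [← sum_norm_sq_partialTrace_single, Finset.mul_sum]
    refine Finset.sum_congr rfl fun i _ => ?_
    rw [Finset.mul_sum]
    refine Finset.sum_congr rfl fun j _ => ?_
    rw [norm_entry_sq, mul_ite, mul_zero]
  have conj_eq : ∀ θ, conjPartialTrace (diagonal (phase θ) * V) (single x x 1) =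
      partialTrace (diagonal (phase θ) * X * (diagonal (phase θ))ᴴ) := fun θ => by
    simp only [conjPartialTrace_apply, X, conjTranspose_mul, Matrix.mul_assoc]
  simp only [conj_eq]
  rw [sum_norm_sq_map_phase_conj partialTrace X, diagonal_part, off_diagonal_part]
  have : Nonempty γ := ⟨x.1⟩
  have : Nonempty ω := ⟨x.2⟩
  rw [hd, Fintype.card_prod]
  push_cast
  field_simp
  ring

end PartialTrace

section Decoupling

lemma exists_flat_unitary (α : Type*) [Fintype α] [DecidableEq α] [Nonempty α] :
    ∃ V : Matrix α α ℂ, V * Vᴴ = 1 ∧ ∀ i j, ‖V i j‖ ^ 2 = 1 / Fintype.card α := by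
  have : NeZero (Fintype.card α) := ⟨Fintype.card_ne_zero⟩
  set d := Fintype.card α
  let z : α ≃ ZMod d := Fintype.equivOfCardEq (ZMod.card d).symm
  have sqrt_mul_self : (((Real.sqrt d)⁻¹ : ℝ) : ℂ) * (((Real.sqrt d)⁻¹ : ℝ) : ℂ) = (d : ℂ)⁻¹ := by
    rw [← Complex.ofReal_mul, ← mul_inv, Real.mul_self_sqrt d.cast_nonneg]
    simp
  let V : Matrix α α ℂ := of fun i j => ((Real.sqrt d)⁻¹ : ℝ) * ZMod.stdAddChar (z i * z j)
  refine ⟨V, ?_, fun i j => ?_⟩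
  · ext i j
    have summand : ∀ k, V i k * Vᴴ k j = (d : ℂ)⁻¹ * ZMod.stdAddChar (z k * (z i - z j)) :=
      fun k => by
        simp only [V, conjTranspose_apply, of_apply, star_mul', Complex.star_def,
          Complex.conj_ofReal]
        rw [← AddChar.map_neg_eq_conj, mul_mul_mul_comm, sqrt_mul_self, ← AddChar.map_add_eq_mul]
        ring_nf
    simp only [Matrix.mul_apply, summand, ← Finset.mul_sum]
    rw [z.sum_comp fun k => (ZMod.stdAddChar (k * (z i - z j)) : ℂ),
      AddChar.sum_mulShift _ (ZMod.isPrimitive_stdAddChar d)]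
    by_cases h : i = j <;> simp [h, sub_eq_zero, ZMod.card, d, Matrix.one_apply]
  · have norm_character : ‖ZMod.stdAddChar (z i * z j)‖ = 1 := Circle.norm_coe _
    simp [V, norm_character, Real.sq_sqrt]

variable {γ ω : Type*} [Fintype γ] [Fintype ω] [DecidableEq γ] [DecidableEq ω]

/-- A finite ensemble of unitaries under which, on average, the second factor is nearly
maximally mixed and uncorrelated with any other system. -/
structure IsDecoupling {ι : Type*} [Fintype ι] (U : ι → Matrix (γ × ω) (γ × ω) ℂ) : Prop where
  isometry : ∀ u, (U u)ᴴ * U u = 1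
  sum_norm_sq_le : ∀ X, ∑ u, ‖partialTrace (U u * X * (U u)ᴴ)‖ ^ 2 ≤
    Fintype.card ι * (‖X‖ ^ 2 / Fintype.card γ + ‖X.trace‖ ^ 2 / Fintype.card ω)

lemma diagonal_phase_mul_conjTranspose {α : Type*} [Fintype α] [DecidableEq α] (e : α → ZMod 3) :
    diagonal (phase e) * (diagonal (phase e))ᴴ = 1 := by
  rw [diagonal_conjTranspose, diagonal_mul_diagonal, ← diagonal_one]
  refine congrArg diagonal (funext fun i => ?_)
  rw [Pi.star_apply, Complex.star_def, Complex.mul_conj', phase, ZMod.stdAddChar_apply,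
    Circle.norm_coe]
  simp

variable [Nonempty γ] [Nonempty ω] {V : Matrix (γ × ω) (γ × ω) ℂ}

lemma card_mul_sum_norm_sq_twirl (hV : V * Vᴴ = 1)
    (flat : ∀ i j, ‖V i j‖ ^ 2 = 1 / Fintype.card (γ × ω)) (X : Matrix (γ × ω) (γ × ω) ℂ) :
    Fintype.card (γ × ω) * (Fintype.card (γ × ω) - 1) *
        ∑ θ : γ × ω → ZMod 3, ∑ π : Equiv.Perm (γ × ω), ∑ e : γ × ω → ZMod 3,
          ‖conjPartialTrace (diagonal (phase θ) * V) (twirl π e X)‖ ^ 2 =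
      Fintype.card (γ × ω → ZMod 3) * Fintype.card (Equiv.Perm (γ × ω)) *
        Fintype.card (γ × ω → ZMod 3) *
          ((Fintype.card γ ^ 2 * Fintype.card ω - Fintype.card γ - Fintype.card ω + 1) *
              ‖X.trace‖ ^ 2 +
            Fintype.card γ * Fintype.card ω * (Fintype.card ω - 1) * ∑ i, ‖X i i‖ ^ 2 +
            (Fintype.card γ * Fintype.card ω ^ 2 - Fintype.card γ - Fintype.card ω + 1) *
              (‖X‖ ^ 2 - ∑ i, ‖X i i‖ ^ 2)) := by
  have unitary : ∀ θ, diagonal (phase θ) * V * (diagonal (phase θ) * V)ᴴ = 1 := fun θ => by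
    rw [conjTranspose_mul, Matrix.mul_assoc, ← Matrix.mul_assoc V, hV, Matrix.one_mul,
      diagonal_phase_mul_conjTranspose]
  let s (θ : γ × ω → ZMod 3) : ℝ :=
    ∑ x, ‖conjPartialTrace (diagonal (phase θ) * V) (single x x 1)‖ ^ 2
  have sum_s : ∑ θ, s θ =
      Fintype.card (γ × ω → ZMod 3) * (Fintype.card γ + Fintype.card ω - 1) := by
    rw [Finset.sum_comm, Finset.sum_congr rfl fun x _ => sum_norm_sq_conjPartialTrace_flat flat x,
      Finset.sum_const, Finset.card_univ, nsmul_eq_mul]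
    field_simp
  have affine_in_s : ∀ θ, Fintype.card (γ × ω) * (Fintype.card (γ × ω) - 1) *
      ∑ π : Equiv.Perm (γ × ω), ∑ e : γ × ω → ZMod 3,
        ‖conjPartialTrace (diagonal (phase θ) * V) (twirl π e X)‖ ^ 2 =
      Fintype.card (Equiv.Perm (γ × ω)) * Fintype.card (γ × ω → ZMod 3) *
        (Fintype.card γ ^ 2 * Fintype.card ω * (‖X.trace‖ ^ 2 - ∑ i, ‖X i i‖ ^ 2) +
          Fintype.card γ * Fintype.card ω ^ 2 * (‖X‖ ^ 2 - ∑ i, ‖X i i‖ ^ 2)) +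
      s θ * (Fintype.card (Equiv.Perm (γ × ω)) * Fintype.card (γ × ω → ZMod 3) *
        ((Fintype.card (γ × ω) + 1) * ∑ i, ‖X i i‖ ^ 2 - ‖X.trace‖ ^ 2 - ‖X‖ ^ 2)) :=
    fun θ => by
      rw [sum_norm_sq_map_twirl, norm_conjPartialTrace_one_sq (unitary θ),
        sum_norm_sq_conjPartialTrace_single (unitary θ)]
      ring
  rw [Finset.mul_sum, Finset.sum_congr rfl fun θ _ => affine_in_s θ, Finset.sum_add_distrib,
    Finset.sum_const, Finset.card_univ, nsmul_eq_mul, ← Finset.sum_mul, sum_s,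
    Fintype.card_prod γ ω]
  push_cast
  ring

lemma sum_norm_sq_twirl_le (hV : V * Vᴴ = 1)
    (flat : ∀ i j, ‖V i j‖ ^ 2 = 1 / Fintype.card (γ × ω)) (hcard : 1 < Fintype.card (γ × ω))
    (X : Matrix (γ × ω) (γ × ω) ℂ) :
    ∑ θ : γ × ω → ZMod 3, ∑ π : Equiv.Perm (γ × ω), ∑ e : γ × ω → ZMod 3,
        ‖conjPartialTrace (diagonal (phase θ) * V) (twirl π e X)‖ ^ 2 ≤
      Fintype.card (γ × ω → ZMod 3) * Fintype.card (Equiv.Perm (γ × ω)) *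
        Fintype.card (γ × ω → ZMod 3) *
          (‖X‖ ^ 2 / Fintype.card γ + ‖X.trace‖ ^ 2 / Fintype.card ω) := by
  have diagonal_le : ∑ i, ‖X i i‖ ^ 2 ≤ ‖X‖ ^ 2 := by
    rw [frobenius_norm_sq]
    exact Finset.sum_le_sum fun i _ => Finset.single_le_sum (f := fun j => ‖X i j‖ ^ 2)
      (fun _ _ => by positivity) (Finset.mem_univ i)
  have diagonal_nonneg : 0 ≤ ∑ i, ‖X i i‖ ^ 2 := by positivity
  have card_eq : (Fintype.card (γ × ω) : ℝ) = Fintype.card γ * Fintype.card ω := by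
    rw [Fintype.card_prod, Nat.cast_mul]
  have hcard' : (1 : ℝ) < Fintype.card (γ × ω) := by exact_mod_cast hcard
  have hc : (1 : ℝ) ≤ Fintype.card γ := Nat.one_le_cast.2 Fintype.card_pos
  have hw : (1 : ℝ) ≤ Fintype.card ω := Nat.one_le_cast.2 Fintype.card_pos
  refine le_of_mul_le_mul_left ?_ (mul_pos (one_pos.trans hcard') (sub_pos.2 hcard'))
  rw [card_mul_sum_norm_sq_twirl hV flat, mul_left_comm]
  refine mul_le_mul_of_nonneg_left ?_ (by positivity)
  rw [card_eq]
  have clear_denominators : (Fintype.card γ * Fintype.card ω : ℝ) *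
      (Fintype.card γ * Fintype.card ω - 1) *
        (‖X‖ ^ 2 / Fintype.card γ + ‖X.trace‖ ^ 2 / Fintype.card ω) =
      (Fintype.card γ * Fintype.card ω - 1) *
        (Fintype.card ω * ‖X‖ ^ 2 + Fintype.card γ * ‖X.trace‖ ^ 2) := by
    field_simp
  have gap_trace : 0 ≤ (Fintype.card ω - 1 : ℝ) * ‖X.trace‖ ^ 2 :=
    mul_nonneg (sub_nonneg.2 hw) (by positivity)
  have gap_diagonal : 0 ≤ (Fintype.card ω * (Fintype.card γ - 1) : ℝ) * ∑ i, ‖X i i‖ ^ 2 :=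
    mul_nonneg (mul_nonneg (by positivity) (sub_nonneg.2 hc)) diagonal_nonneg
  have gap_off_diagonal : 0 ≤ (Fintype.card γ - 1 : ℝ) * (‖X‖ ^ 2 - ∑ i, ‖X i i‖ ^ 2) :=
    mul_nonneg (sub_nonneg.2 hc) (sub_nonneg.2 diagonal_le)
  rw [clear_denominators]
  linear_combination gap_trace + gap_diagonal + gap_off_diagonal

lemma isDecoupling_one {ι : Type*} [Fintype ι] (h : Fintype.card (γ × ω) ≤ 1) :
    IsDecoupling fun _ : ι => (1 : Matrix (γ × ω) (γ × ω) ℂ) where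
  isometry _ := by rw [conjTranspose_one, Matrix.mul_one]
  sum_norm_sq_le X := by
    have hγ : Fintype.card γ = 1 := le_antisymm
      ((Fintype.card_le_of_surjective _ Prod.fst_surjective).trans h) Fintype.card_pos
    have contraction := norm_partialTrace_sq_le X
    simp only [conjTranspose_one, Matrix.mul_one, Finset.sum_const,
      Finset.card_univ, nsmul_eq_mul, hγ, Nat.cast_one, div_one, one_mul] at contraction ⊢
    gcongr
    exact contraction.trans (le_add_of_nonneg_right (by positivity))

/-- The index type of `randomUnitary`. -/
abbrev UnitaryIndex (α : Type*) : Type _ := (α → ZMod 3) × Equiv.Perm α × (α → ZMod 3)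

/-- A unitary `V` with a random diagonal on its left, and a random permutation followed by another
random diagonal on its right. -/
noncomputable def randomUnitary {α : Type*} [Fintype α] [DecidableEq α] (V : Matrix α α ℂ)
    (u : UnitaryIndex α) : Matrix α α ℂ :=
  (diagonal (phase u.1) * V).submatrix id u.2.1 * diagonal (phase u.2.2)

lemma randomUnitary_conj {α : Type*} [Fintype α] [DecidableEq α] (V X : Matrix α α ℂ)
    (u : UnitaryIndex α) :
    randomUnitary V u * X * (randomUnitary V u)ᴴ =
      diagonal (phase u.1) * V * twirl u.2.1 u.2.2 X * (diagonal (phase u.1) * V)ᴴ := by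
  set Y := diagonal (phase u.2.2) * X * (diagonal (phase u.2.2))ᴴ with hY
  have permute : Y = (twirl u.2.1 u.2.2 X).submatrix u.2.1 u.2.1 := by simp [twirl, hY]
  rw [randomUnitary, conjTranspose_mul, ← Matrix.mul_assoc, Matrix.mul_assoc _ _ X,
    Matrix.mul_assoc _ _ (diagonal _)ᴴ, ← hY, permute, conjTranspose_submatrix,
    submatrix_mul_equiv, submatrix_mul_equiv, submatrix_id_id]

lemma isDecoupling_randomUnitary (hV : V * Vᴴ = 1)
    (flat : ∀ i j, ‖V i j‖ ^ 2 = 1 / Fintype.card (γ × ω)) (hcard : 1 < Fintype.card (γ × ω)) :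
    IsDecoupling (randomUnitary V) where
  isometry u := by
    have h := randomUnitary_conj V 1 u
    have twirl_one : twirl u.2.1 u.2.2 (1 : Matrix (γ × ω) (γ × ω) ℂ) = 1 := by
      rw [twirl, Matrix.mul_one, diagonal_phase_mul_conjTranspose, submatrix_one_equiv]
    rw [twirl_one, Matrix.mul_one, Matrix.mul_one, conjTranspose_mul, Matrix.mul_assoc,
      ← Matrix.mul_assoc V, hV, Matrix.one_mul, diagonal_phase_mul_conjTranspose] at h
    exact mul_eq_one_comm.1 h
  sum_norm_sq_le X := by
    rw [Fintype.card_prod (γ × ω → ZMod 3) (_ × _), Fintype.card_prod (Equiv.Perm (γ × ω)),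
      Nat.cast_mul, Nat.cast_mul, ← mul_assoc, Fintype.sum_prod_type]
    simp only [Fintype.sum_prod_type (α₁ := Equiv.Perm (γ × ω)), randomUnitary_conj,
      ← conjPartialTrace_apply]
    exact sum_norm_sq_twirl_le hV flat hcard X

variable (γ ω) in
lemma exists_isDecoupling :
    ∃ U : UnitaryIndex (γ × ω) → Matrix (γ × ω) (γ × ω) ℂ, IsDecoupling U := by
  rcases le_or_gt (Fintype.card (γ × ω)) 1 with h | h
  · exact ⟨_, isDecoupling_one h⟩
  · obtain ⟨V, hV, flat⟩ := exists_flat_unitary (γ × ω)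
    exact ⟨_, isDecoupling_randomUnitary hV flat h⟩

end Decoupling

section Purity

variable {s t u v : Type*} [Fintype s] [Fintype t] [Fintype u] [Fintype v]

/-- The purity of the reduced state `X Xᴴ` of the bipartite vector with amplitudes `X i j`;
by `purity_transpose` it does not matter which of the two systems is kept. -/
noncomputable def purity (X : Matrix s t ℂ) : ℝ := ‖X * Xᴴ‖ ^ 2

lemma purity_eq_sum (X : Matrix s t ℂ) :
    purity X = ∑ j, ∑ j', ‖∑ i, X i j * star (X i j')‖ ^ 2 := by
  rw [purity, norm_mul_conjTranspose_self, frobenius_norm_sq, Finset.sum_comm]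
  simp only [mul_apply, conjTranspose_apply, mul_comm]

lemma purity_eq_sum_blocks (X : Matrix s (u × t) ℂ) :
    purity X = ∑ p, ∑ p', ‖of fun w w' => ∑ i, X i (w, p) * star (X i (w', p'))‖ ^ 2 := by
  simp only [purity_eq_sum, frobenius_norm_sq, of_apply, Fintype.sum_prod_type_right]
  refine Finset.sum_congr rfl fun p _ => ?_
  rw [Finset.sum_comm]

lemma purity_transpose (X : Matrix s t ℂ) : purity Xᵀ = purity X := by
  rw [purity_eq_sum, purity, frobenius_norm_sq]
  simp only [mul_apply, conjTranspose_apply, transpose_apply]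

lemma purity_submatrix (X : Matrix s t ℂ) (e : u ≃ s) (f : v ≃ t) :
    purity (X.submatrix e f) = purity X := by
  simp only [purity_eq_sum, submatrix_apply]
  rw [← f.sum_comp]
  refine Finset.sum_congr rfl fun j _ => ?_
  rw [← f.sum_comp]
  refine Finset.sum_congr rfl fun j' _ => ?_
  rw [← e.sum_comp]

lemma purity_of_subsingleton [Unique s] (X : Matrix s t ℂ) : purity X = ‖X‖ ^ 4 := by
  have gram_apply : ((X * Xᴴ) default default) = (‖X‖ ^ 2 : ℝ) := by
    rw [frobenius_norm_sq]
    simp [mul_apply, Complex.mul_conj']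
  rw [purity, frobenius_norm_sq, Fintype.sum_unique, Fintype.sum_unique, gram_apply,
    Complex.norm_real, norm_pow, norm_norm]
  ring

lemma purity_mul_le [DecidableEq u] (X : Matrix s t ℂ) {Z : Matrix t u ℂ}
    (hZ : IsContraction Z) : purity (X * Z) ≤ purity X := by
  classical
  have gram : (X * Z)ᴴ * (X * Z) = Zᴴ * (Xᴴ * X * Z) := by
    simp only [conjTranspose_mul, Matrix.mul_assoc]
  rw [purity, purity, norm_mul_conjTranspose_self, norm_mul_conjTranspose_self, gram]
  gcongr
  exact (hZ.conjTranspose.norm_mul_le _).trans (hZ.norm_mul_le' _)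

end Purity

section Slices

variable {a b r a' b' r' : Type*}

/-- A tripartite amplitude matrix `M (x, y) z`, regrouped with the first system as rows. -/
def sliceA (M : Matrix (a × b) r ℂ) : Matrix a (b × r) ℂ := of fun x q => M (x, q.1) q.2

/-- A tripartite amplitude matrix `M (x, y) z`, regrouped with the second system as rows. -/
def sliceB (M : Matrix (a × b) r ℂ) : Matrix b (a × r) ℂ := of fun y q => M (q.1, y) q.2

variable [Fintype a] [Fintype b] [Fintype r]

lemma sliceA_mul_mul (K : Matrix a' a ℂ) (L : Matrix b' b ℂ) (M : Matrix (a × b) r ℂ)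
    (P : Matrix r r' ℂ) :
    sliceA ((K ⊗ₖ L) * M * P) = K * sliceA M * (L ⊗ₖ Pᵀ)ᵀ := by
  ext x ⟨y, z⟩
  simp only [sliceA, of_apply, mul_apply, kroneckerMap_apply, transpose_apply, Finset.sum_mul,
    Fintype.sum_prod_type]
  rw [Finset.sum_comm (s := (Finset.univ : Finset r))]
  refine (Finset.sum_congr rfl fun x' _ => Finset.sum_comm).trans ?_
  rw [Finset.sum_comm]
  refine Finset.sum_congr rfl fun y' _ => ?_
  rw [Finset.sum_comm]
  refine Finset.sum_congr rfl fun z' _ => Finset.sum_congr rfl fun x' _ => ?_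
  ring

lemma sliceB_mul_mul (K : Matrix a' a ℂ) (L : Matrix b' b ℂ) (M : Matrix (a × b) r ℂ)
    (P : Matrix r r' ℂ) :
    sliceB ((K ⊗ₖ L) * M * P) = L * sliceB M * (K ⊗ₖ Pᵀ)ᵀ := by
  ext y ⟨x, z⟩
  simp only [sliceB, of_apply, mul_apply, kroneckerMap_apply, transpose_apply, Finset.sum_mul,
    Fintype.sum_prod_type]
  rw [Finset.sum_comm]
  refine Finset.sum_congr rfl fun x' _ => Finset.sum_congr rfl fun z' _ =>
    Finset.sum_congr rfl fun y' _ => ?_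
  ring

lemma norm_sliceA_sq (M : Matrix (a × b) r ℂ) : ‖sliceA M‖ ^ 2 = ‖M‖ ^ 2 := by
  simp only [frobenius_norm_sq, sliceA, of_apply, Fintype.sum_prod_type]

lemma norm_sliceB_sq (M : Matrix (a × b) r ℂ) : ‖sliceB M‖ ^ 2 = ‖M‖ ^ 2 := by
  simp only [frobenius_norm_sq, sliceB, of_apply, Fintype.sum_prod_type]
  exact Finset.sum_comm

end Slices

section TwoPartyDecoupling

lemma IsDecoupling.sum_purity_le {ι γ ω : Type*} [Fintype ι] [Fintype γ] [Fintype ω]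
    [DecidableEq γ] [DecidableEq ω] {U : ι → Matrix (γ × ω) (γ × ω) ℂ} (hU : IsDecoupling U)
    {u t : Type*} [Fintype u] [Fintype t] (f : γ × ω → u → t → ℂ) :
    ∑ i, purity (of fun (q : γ × u) (p : ω × t) => ∑ x, U i (q.1, p.1) x * f x q.2 p.2) ≤
      Fintype.card ι *
        (purity (of fun (q : u) (p : (γ × ω) × t) => f p.1 q p.2) / Fintype.card γ +
          purity (of fun (q : (γ × ω) × u) (p : t) => f q.1 q.2 p) / Fintype.card ω) := by
  let X : t → t → Matrix (γ × ω) (γ × ω) ℂ := fun p p' =>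
    of fun x x' => ∑ q, f x q p * star (f x' q p')
  have encoded : ∀ i p p', partialTrace (U i * X p p' * (U i)ᴴ) =
      of fun w w' => ∑ q : γ × u, (∑ x, U i (q.1, w) x * f x q.2 p) *
        star (∑ x, U i (q.1, w') x * f x q.2 p') := fun i p p' => by
    ext w w'
    rw [partialTrace_apply, of_apply, Fintype.sum_prod_type]
    refine Finset.sum_congr rfl fun c _ => ?_
    simp only [mul_apply, X, of_apply, conjTranspose_apply, star_sum, star_mul', Finset.mul_sum,
      Finset.sum_mul]
    rw [Finset.sum_comm (s := (Finset.univ : Finset u))]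
    refine Finset.sum_congr rfl fun x _ => ?_
    rw [Finset.sum_comm]
    refine Finset.sum_congr rfl fun q _ => Finset.sum_congr rfl fun x' _ => ?_
    ring
  have purity_encoded : ∀ i, purity (of fun (q : γ × u) (p : ω × t) =>
      ∑ x, U i (q.1, p.1) x * f x q.2 p.2) =
        ∑ p, ∑ p', ‖partialTrace (U i * X p p' * (U i)ᴴ)‖ ^ 2 := fun i => by
    simp only [purity_eq_sum_blocks, of_apply, encoded]
  have purity_discarded : purity (of fun (q : (γ × ω) × u) (p : t) => f q.1 q.2 p) =
      ∑ p, ∑ p', ‖(X p p').trace‖ ^ 2 := by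
    simp only [purity_eq_sum, of_apply, Fintype.sum_prod_type (α₁ := γ × ω), X, trace, diag_apply]
  rw [purity_discarded, purity_eq_sum_blocks]
  simp only [purity_encoded, of_apply]
  rw [Finset.sum_comm, Finset.sum_div, Finset.sum_div, ← Finset.sum_add_distrib, Finset.mul_sum]
  refine Finset.sum_le_sum fun p _ => ?_
  rw [Finset.sum_comm, Finset.sum_div, Finset.sum_div, ← Finset.sum_add_distrib, Finset.mul_sum]
  exact Finset.sum_le_sum fun p' _ => hU.sum_norm_sq_le (X p p')

section SingleEncoder

/-- The reassociation `a × (b × c) ≃ b × (a × c)`. -/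
def prodLeftComm (a b c : Type*) : a × (b × c) ≃ b × (a × c) where
  toFun p := (p.2.1, p.1, p.2.2)
  invFun p := (p.2.1, p.1, p.2.2)

variable {ι γ ω a r : Type*} [Fintype ι] [Fintype γ] [Fintype ω] [DecidableEq γ] [DecidableEq ω]
  [Fintype a] [Fintype r] {U : ι → Matrix (γ × ω) (γ × ω) ℂ}

lemma IsDecoupling.sum_purity_reference_le (hU : IsDecoupling U)
    (χ : Matrix (a × (γ × ω)) r ℂ) :
    ∑ i, purity (of fun (q : γ) (p : a × (ω × r)) =>
        ∑ y, U i (q, p.2.1) y * χ (p.1, y) p.2.2) ≤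
      Fintype.card ι * (‖χ‖ ^ 4 / Fintype.card γ + purity (sliceB χ) / Fintype.card ω) := by
  have bound := hU.sum_purity_le (u := Unit) fun y _ (p : a × r) => χ (p.1, y) p.2
  have reindexed : ∀ i, (of fun (q : γ) (p : a × (ω × r)) =>
      ∑ y, U i (q, p.2.1) y * χ (p.1, y) p.2.2) =
        (of fun (q : γ × Unit) (p : ω × (a × r)) =>
          ∑ y, U i (q.1, p.1) y * χ (p.2.1, y) p.2.2).submatrix (Equiv.prodPUnit γ).symm
            (prodLeftComm a ω r) := fun i => rfl
  have sliceB_eq : sliceB χ = (of fun (q : (γ × ω) × Unit) (p : a × r) =>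
      χ (p.1, q.1) p.2).submatrix (Equiv.prodPUnit _).symm (Equiv.refl _) := rfl
  have norm_eq : ‖of fun (_ : Unit) (p : (γ × ω) × (a × r)) => χ (p.2.1, p.1) p.2.2‖ ^ 4 =
      ‖χ‖ ^ 4 := by
    rw [pow_mul _ 2 2, pow_mul ‖χ‖ 2 2, ← norm_sliceB_sq χ, frobenius_norm_sq, frobenius_norm_sq]
    simp [sliceB, Fintype.sum_prod_type]
  simp only [reindexed, sliceB_eq, purity_submatrix]
  rwa [purity_of_subsingleton, norm_eq] at bound

lemma IsDecoupling.sum_purity_discard_le (hU : IsDecoupling U)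
    (χ : Matrix (a × (γ × ω)) r ℂ) :
    ∑ i, purity (of fun (q : a × γ) (p : ω × r) =>
        ∑ y, U i (q.2, p.1) y * χ (q.1, y) p.2) ≤
      Fintype.card ι * (purity (sliceA χ) / Fintype.card γ + purity χ / Fintype.card ω) := by
  have bound := hU.sum_purity_le fun y x z => χ (x, y) z
  have reindexed : ∀ i, (of fun (q : a × γ) (p : ω × r) =>
      ∑ y, U i (q.2, p.1) y * χ (q.1, y) p.2) =
        (of fun (q : γ × a) (p : ω × r) =>
          ∑ y, U i (q.1, p.1) y * χ (q.2, y) p.2).submatrix (Equiv.prodComm a γ)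
            (Equiv.refl _) := fun i => rfl
  have χ_eq : χ = (of fun (q : (γ × ω) × a) (p : r) => χ (q.2, q.1) p).submatrix
      (Equiv.prodComm a (γ × ω)) (Equiv.refl _) := rfl
  have purity_χ := congrArg purity χ_eq
  rw [purity_submatrix] at purity_χ
  simp only [reindexed, purity_submatrix, purity_χ]
  exact bound

end SingleEncoder

variable {γA ωA γB ωB ρ : Type*}

/-- The amplitudes of a pair of encoded systems, regrouped with the transmitted systems as rows
and the reference together with the systems kept by the encoders as columns. -/
def splitTransmitted (χ : Matrix ((γA × ωA) × (γB × ωB)) ρ ℂ) :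
    Matrix (γA × γB) (ρ × (ωA × ωB)) ℂ :=
  of fun c q => χ ((c.1, q.2.1), (c.2, q.2.2)) q.1

lemma splitTransmitted_apply (χ : Matrix ((γA × ωA) × (γB × ωB)) ρ ℂ) (c : γA × γB)
    (q : ρ × (ωA × ωB)) :
    splitTransmitted χ c q = χ ((c.1, q.2.1), (c.2, q.2.2)) q.1 := rfl

variable [Fintype ωA] [Fintype ωB] [Fintype ρ]

lemma splitTransmitted_mul [DecidableEq ωA] [DecidableEq ωB] {σ : Type*}
    (χ : Matrix ((γA × ωA) × (γB × ωB)) ρ ℂ) (P : Matrix ρ σ ℂ) :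
    splitTransmitted (χ * P) = splitTransmitted χ * (P ⊗ₖ (1 : Matrix (ωA × ωB) _ ℂ)) := by
  ext c ⟨z, w⟩
  rw [splitTransmitted_apply, mul_apply, mul_apply, Fintype.sum_prod_type]
  refine Finset.sum_congr rfl fun z' _ => ?_
  simp [splitTransmitted_apply, one_apply]

variable [Fintype γA] [Fintype γB]

lemma norm_splitTransmitted_sq (χ : Matrix ((γA × ωA) × (γB × ωB)) ρ ℂ) :
    ‖splitTransmitted χ‖ ^ 2 = ‖χ‖ ^ 2 := by
  simp only [frobenius_norm_sq, splitTransmitted, of_apply, ← Fintype.sum_prod_type']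
  exact Fintype.sum_equiv
    ⟨fun p => (((p.1.1, p.2.2.1), (p.1.2, p.2.2.2)), p.2.1),
      fun q => ((q.1.1.1, q.1.2.1), (q.2, (q.1.1.2, q.1.2.2))), fun _ => rfl, fun _ => rfl⟩ _ _
    fun _ => rfl

variable [DecidableEq γA] [DecidableEq ωA] [DecidableEq γB] [DecidableEq ωB]

lemma IsDecoupling.sum_sum_purity_le {ι κ : Type*} [Fintype ι] [Fintype κ]
    {UA : ι → Matrix (γA × ωA) (γA × ωA) ℂ} {UB : κ → Matrix (γB × ωB) (γB × ωB) ℂ}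
    (hUA : IsDecoupling UA) (hUB : IsDecoupling UB)
    (χ : Matrix ((γA × ωA) × (γB × ωB)) ρ ℂ) :
    ∑ j, ∑ i, purity (splitTransmitted ((UA i ⊗ₖ UB j) * χ)) ≤
      Fintype.card ι * (Fintype.card κ *
        ((‖χ‖ ^ 4 / Fintype.card γB + purity (sliceB χ) / Fintype.card ωB) / Fintype.card γA +
          (purity (sliceA χ) / Fintype.card γB + purity χ / Fintype.card ωB) /
            Fintype.card ωA)) := by
  let g : κ → γA × ωA → γB → ωB × ρ → ℂ := fun j x c p =>
    ∑ y, UB j (c, p.1) y * χ (x, y) p.2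
  have encoded : ∀ i j, splitTransmitted ((UA i ⊗ₖ UB j) * χ) =
      (of fun (q : γA × γB) (p : ωA × (ωB × ρ)) =>
        ∑ x, UA i (q.1, p.1) x * g j x q.2 p.2).submatrix (Equiv.refl _)
          ((Equiv.prodComm ρ (ωA × ωB)).trans (Equiv.prodAssoc ωA ωB ρ)) := fun i j => by
    ext c q
    simp only [splitTransmitted, of_apply, submatrix_apply, mul_apply, kroneckerMap_apply, g,
      Finset.mul_sum, Fintype.sum_prod_type (α₁ := γA × ωA), mul_assoc]
    rfl
  have encode_A : ∀ j, ∑ i, purity (splitTransmitted ((UA i ⊗ₖ UB j) * χ)) ≤ Fintype.card ι *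
      (purity (of fun (q : γB) (p : (γA × ωA) × (ωB × ρ)) => g j p.1 q p.2) / Fintype.card γA +
        purity (of fun (q : (γA × ωA) × γB) (p : ωB × ρ) => g j q.1 q.2 p) / Fintype.card ωA) :=
    fun j => by
      simp only [encoded, purity_submatrix]
      exact hUA.sum_purity_le (g j)
  refine (Finset.sum_le_sum fun j _ => encode_A j).trans ?_
  rw [← Finset.mul_sum, Finset.sum_add_distrib, ← Finset.sum_div, ← Finset.sum_div,
    mul_add (Fintype.card κ : ℝ), ← mul_div_assoc, ← mul_div_assoc]
  have reference := hUB.sum_purity_reference_le χ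
  have discard := hUB.sum_purity_discard_le χ
  gcongr

lemma exists_unitary_purity_splitTransmitted_le [Nonempty γA] [Nonempty ωA] [Nonempty γB]
    [Nonempty ωB] (χ : Matrix ((γA × ωA) × (γB × ωB)) ρ ℂ) :
    ∃ (UA : Matrix (γA × ωA) (γA × ωA) ℂ) (UB : Matrix (γB × ωB) (γB × ωB) ℂ),
      UAᴴ * UA = 1 ∧ UBᴴ * UB = 1 ∧
      purity (splitTransmitted ((UA ⊗ₖ UB) * χ)) ≤
        ‖χ‖ ^ 4 / (Fintype.card γA * Fintype.card γB) +
        purity (sliceB χ) / (Fintype.card γA * Fintype.card ωB) +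
        purity (sliceA χ) / (Fintype.card ωA * Fintype.card γB) +
        purity χ / (Fintype.card ωA * Fintype.card ωB) := by
  obtain ⟨UA, hUA⟩ := exists_isDecoupling γA ωA
  obtain ⟨UB, hUB⟩ := exists_isDecoupling γB ωB
  have average := hUA.sum_sum_purity_le hUB χ
  rw [← Fintype.sum_prod_type', ← mul_assoc, ← Nat.cast_mul, mul_comm (Fintype.card _),
    ← Fintype.card_prod, ← nsmul_eq_mul, ← Finset.card_univ, ← Finset.sum_const] at average
  obtain ⟨⟨j, i⟩, -, hij⟩ := Finset.exists_le_of_sum_le Finset.univ_nonempty average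
  refine ⟨UA i, UB j, hUA.isometry i, hUB.isometry j, hij.trans_eq ?_⟩
  simp only [add_div, div_div, mul_comm]
  ring

end TwoPartyDecoupling

section EntangledTarget

variable {m r W : Type*} [Fintype W] [DecidableEq W]

variable (W) in
/-- The amplitude matrix of `M` together with a maximally entangled state on `W ⊗ W`. -/
noncomputable def withEntanglement (M : Matrix m r ℂ) : Matrix (m × W) (r × W) ℂ :=
  M ⊗ₖ (((1 / √(Fintype.card W) : ℝ) : ℂ) • (1 : Matrix W W ℂ))

variable (W) in
/-- The maximally mixed state on `W`. -/
noncomputable def maximallyMixed : Matrix W W ℂ :=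
  ((1 / Fintype.card W : ℝ) : ℂ) • 1

lemma withEntanglement_mul_left {m' : Type*} [Fintype m] (V : Matrix m' m ℂ) (M : Matrix m r ℂ) :
    withEntanglement W (V * M) = (V ⊗ₖ (1 : Matrix W W ℂ)) * withEntanglement W M := by
  rw [withEntanglement, withEntanglement, ← mul_kronecker_mul, Matrix.one_mul]

lemma withEntanglement_mul_right {r' : Type*} [Fintype r] (M : Matrix m r ℂ) (P : Matrix r r' ℂ) :
    withEntanglement W (M * P) = withEntanglement W M * (P ⊗ₖ (1 : Matrix W W ℂ)) := by
  rw [withEntanglement, withEntanglement, ← mul_kronecker_mul, Matrix.mul_one]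

variable [Fintype m]

lemma withEntanglement_conjTranspose_mul_self (M : Matrix m r ℂ) :
    (withEntanglement W M)ᴴ * withEntanglement W M =
      (Mᴴ * M) ⊗ₖ maximallyMixed W := by
  rw [withEntanglement, conjTranspose_kronecker, maximallyMixed, ← mul_kronecker_mul,
    conjTranspose_smul, conjTranspose_one, smul_mul_smul_comm, Matrix.one_mul, Complex.star_def,
    Complex.conj_ofReal, ← Complex.ofReal_mul, div_mul_div_comm, one_mul,
    Real.mul_self_sqrt (Nat.cast_nonneg _)]

variable [Fintype r]

lemma trace_withEntanglement_conjTranspose_mul (M : Matrix m r ℂ)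
    (Y : Matrix (m × W) (r × W) ℂ) :
    ((withEntanglement W M)ᴴ * Y).trace =
      ((1 / √(Fintype.card W) : ℝ) : ℂ) * ∑ w, ∑ z, ∑ x, star (M x z) * Y (x, w) (z, w) := by
  simp only [trace, diag_apply, mul_apply, conjTranspose_apply, withEntanglement,
    kroneckerMap_apply, Matrix.smul_apply, one_apply, smul_eq_mul, mul_ite, mul_one, mul_zero,
    Fintype.sum_prod_type, apply_ite star, star_zero, ite_mul, zero_mul, Finset.sum_ite_eq',
    Finset.mem_univ, if_true, star_mul', Complex.star_def, Complex.conj_ofReal]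
  rw [Finset.sum_comm]
  simp only [Finset.mul_sum]
  refine Finset.sum_congr rfl fun w _ => Finset.sum_congr rfl fun z _ =>
    Finset.sum_congr rfl fun x _ => ?_
  ring

lemma norm_sq_trace_withEntanglement_conjTranspose_mul_le (M : Matrix m r ℂ)
    (Y : Matrix (m × W) (r × W) ℂ) :
    ‖((withEntanglement W M)ᴴ * Y).trace‖ ^ 2 ≤
      ∑ w, ‖∑ z, ∑ x, star (M x z) * Y (x, w) (z, w)‖ ^ 2 := by
  rw [trace_withEntanglement_conjTranspose_mul, norm_mul, Complex.norm_real,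
    Real.norm_of_nonneg (by positivity), mul_pow, div_pow, one_pow,
    Real.sq_sqrt (Nat.cast_nonneg _), one_div]
  refine inv_mul_le_of_le_mul₀ (Nat.cast_nonneg _) (by positivity) ?_
  calc _ ≤ (∑ w, ‖∑ z, ∑ x, star (M x z) * Y (x, w) (z, w)‖) ^ 2 := by
        gcongr
        exact norm_sum_le _ _
    _ ≤ _ := sq_sum_le_card_mul_sum_sq

lemma norm_withEntanglement [Nonempty W] (M : Matrix m r ℂ) : ‖withEntanglement W M‖ = ‖M‖ := by
  refine (sq_eq_sq₀ (norm_nonneg _) (norm_nonneg _)).1 ?_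
  have hW : (Fintype.card W : ℝ) ≠ 0 := Nat.cast_ne_zero.2 Fintype.card_ne_zero
  rw [← re_trace_conjTranspose_mul_self, withEntanglement_conjTranspose_mul_self,
    trace_kronecker, maximallyMixed, trace_smul, trace_one, trace_conjTranspose_mul_self,
    smul_eq_mul, ← Complex.ofReal_natCast, ← Complex.ofReal_mul, ← Complex.ofReal_mul,
    Complex.ofReal_re, one_div_mul_cancel hW, mul_one]

lemma re_trace_conjTranspose_mul_kronecker_maximallyMixed {σ : Matrix (r × W) (r × W) ℂ}
    {θ : Matrix r r ℂ} (h : ∀ z z', ∑ w, σ (z, w) (z', w) = θ z z') :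
    (σᴴ * (θ ⊗ₖ maximallyMixed W)).trace.re = ‖θ‖ ^ 2 / Fintype.card W := by
  have trace_eq : (σᴴ * (θ ⊗ₖ maximallyMixed W)).trace =
      ((1 / Fintype.card W : ℝ) : ℂ) * (θᴴ * θ).trace := by
    simp only [trace, diag_apply, mul_apply, conjTranspose_apply, maximallyMixed,
      kroneckerMap_apply, Matrix.smul_apply, one_apply, smul_eq_mul, mul_ite, mul_one, mul_zero,
      Fintype.sum_prod_type, Finset.sum_ite_eq', Finset.mem_univ, if_true, Finset.mul_sum]
    refine Finset.sum_congr rfl fun z' _ => ?_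
    rw [Finset.sum_comm]
    refine Finset.sum_congr rfl fun z _ => ?_
    rw [← Finset.sum_mul, ← star_sum, h]
    ring
  rw [trace_eq, trace_conjTranspose_mul_self, ← Complex.ofReal_mul, Complex.ofReal_re,
    one_div_mul_eq_div]

-- Pythagoras: `θ ⊗ 1 / |W|` is the orthogonal projection of `σ` to the matrices `· ⊗ 1`.
lemma norm_sub_kronecker_maximallyMixed_sq [Nonempty W] {σ : Matrix (r × W) (r × W) ℂ}
    {θ : Matrix r r ℂ} (h : ∀ z z', ∑ w, σ (z, w) (z', w) = θ z z') :
    ‖σ - θ ⊗ₖ maximallyMixed W‖ ^ 2 = ‖σ‖ ^ 2 - ‖θ‖ ^ 2 / Fintype.card W := by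
  have trace_mixed : ∀ z z',
      ∑ w : W, (θ ⊗ₖ maximallyMixed W : Matrix _ _ ℂ) (z, w) (z', w) = θ z z' := by
    have hW : (Fintype.card W : ℂ) ≠ 0 := Nat.cast_ne_zero.2 Fintype.card_ne_zero
    intro z z'
    simp only [maximallyMixed, kroneckerMap_apply, Matrix.smul_apply, one_apply_eq, smul_eq_mul,
      mul_one, Finset.sum_const, Finset.card_univ, nsmul_eq_mul, Complex.ofReal_div,
      Complex.ofReal_one, Complex.ofReal_natCast]
    field_simp
  rw [frobenius_norm_sub_sq, re_trace_conjTranspose_mul_kronecker_maximallyMixed h,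
    ← re_trace_conjTranspose_mul_self (θ ⊗ₖ maximallyMixed W),
    re_trace_conjTranspose_mul_kronecker_maximallyMixed trace_mixed]
  ring

end EntangledTarget

/-- `P` compresses the marginal `X * Xᴴ` to a smaller system, losing at most `η` of its weight and
leaving it with purity at most `μ`. -/
structure IsTypicalCompression {α a q : Type*} [Fintype α] [Fintype a] [Fintype q] [DecidableEq a]
    (P : Matrix α a ℂ) (X : Matrix a q ℂ) (η μ : ℝ) : Prop where
  isContraction : IsContraction P
  le_norm_sq : 1 - η ≤ ‖P * X‖ ^ 2
  purity_le : purity (P * X) ≤ μ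

section UnionBound

lemma norm_sq_sub_norm_mul_sq {k m r : Type*} [Fintype k] [Fintype m] [Fintype r] [DecidableEq m]
    {K : Matrix k m ℂ} {B : Matrix m m ℂ} (h : 1 - Kᴴ * K = Bᴴ * B) (X : Matrix m r ℂ) :
    ‖X‖ ^ 2 - ‖K * X‖ ^ 2 = ‖B * X‖ ^ 2 := by
  have gram : (B * X)ᴴ * (B * X) = Xᴴ * X - (K * X)ᴴ * (K * X) := by
    rw [conjTranspose_mul, Matrix.mul_assoc, ← Matrix.mul_assoc Bᴴ, ← h, Matrix.sub_mul,
      Matrix.one_mul, Matrix.mul_sub, conjTranspose_mul]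
    simp only [Matrix.mul_assoc]
  rw [← re_trace_conjTranspose_mul_self (B * X), gram, trace_sub, Complex.sub_re,
    re_trace_conjTranspose_mul_self, re_trace_conjTranspose_mul_self]

lemma norm_mul_sq_of_conjTranspose_mul_self {k m r : Type*} [Fintype k] [Fintype m] [Fintype r]
    [DecidableEq m] {U : Matrix k m ℂ} (hU : Uᴴ * U = 1) (X : Matrix m r ℂ) :
    ‖U * X‖ ^ 2 = ‖X‖ ^ 2 := by
  have defect := norm_sq_sub_norm_mul_sq (B := 0) (by rw [hU]; simp) X
  rw [Matrix.zero_mul, norm_zero, zero_pow two_ne_zero] at defect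
  linarith

lemma kronecker_conjTranspose_mul_self_eq_one {k l m n : Type*} [Fintype k] [Fintype l]
    [DecidableEq m] [DecidableEq n] {U : Matrix k m ℂ} {V : Matrix l n ℂ} (hU : Uᴴ * U = 1)
    (hV : Vᴴ * V = 1) : (U ⊗ₖ V)ᴴ * (U ⊗ₖ V) = 1 := by
  rw [conjTranspose_kronecker, ← mul_kronecker_mul, hU, hV, one_kronecker_one]

lemma IsContraction.norm_sq_mul_sub_norm_sq_le {k m r ρ : Type*} [Fintype k] [Fintype m] [Fintype r]
    [Fintype ρ] [DecidableEq m] [DecidableEq ρ] {K : Matrix k m ℂ}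
    (hK : IsContraction K) (M : Matrix m r ℂ) {P : Matrix r ρ ℂ} (hP : IsContraction P) :
    ‖M * P‖ ^ 2 - ‖K * (M * P)‖ ^ 2 ≤ ‖M‖ ^ 2 - ‖K * M‖ ^ 2 := by
  obtain ⟨B, hB⟩ := CStarAlgebra.nonneg_iff_eq_star_mul_self.1 (PosSemidef.nonneg hK)
  rw [star_eq_conjTranspose] at hB
  rw [norm_sq_sub_norm_mul_sq hB, norm_sq_sub_norm_mul_sq hB, ← Matrix.mul_assoc]
  exact pow_le_pow_left₀ (norm_nonneg _) (hP.norm_mul_le' _) 2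

variable {a b r α β ρ : Type*} [Fintype a] [Fintype b] [Fintype r] [Fintype α] [Fintype β]
  [Fintype ρ] [DecidableEq a] [DecidableEq b] [DecidableEq ρ]

lemma one_sub_add_le_norm_kronecker_mul_mul_sq {M : Matrix (a × b) r ℂ}
    (hM : ‖M‖ = 1) {PA : Matrix α a ℂ} {PB : Matrix β b ℂ} {P : Matrix r ρ ℂ}
    (hPA : IsContraction PA) (hPB : IsContraction PB) (hP : IsContraction P) {ηA ηB ηR : ℝ}
    (hA : 1 - ηA ≤ ‖PA * sliceA M‖ ^ 2) (hB : 1 - ηB ≤ ‖PB * sliceB M‖ ^ 2)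
    (hR : 1 - ηR ≤ ‖M * P‖ ^ 2) :
    1 - (ηA + ηB + ηR) ≤ ‖(PA ⊗ₖ PB) * M * P‖ ^ 2 := by
  classical
  have reference := (hPA.kronecker hPB).norm_sq_mul_sub_norm_sq_le M hP
  have parties := hPA.norm_sq_mul_sub_norm_sq_le (sliceA M)
    (hPB.kronecker (IsContraction.one (m := r))).transpose
  have joint : ‖PA * (sliceA M * (PB ⊗ₖ (1 : Matrix r r ℂ))ᵀ)‖ ^ 2 = ‖(PA ⊗ₖ PB) * M‖ ^ 2 := by
    rw [← norm_sliceA_sq, ← Matrix.mul_one ((PA ⊗ₖ PB) * M), sliceA_mul_mul, transpose_one,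
      Matrix.mul_assoc]
  have second : ‖sliceA M * (PB ⊗ₖ (1 : Matrix r r ℂ))ᵀ‖ ^ 2 = ‖PB * sliceB M‖ ^ 2 := by
    have slice_A := sliceA_mul_mul (1 : Matrix a a ℂ) PB M (1 : Matrix r r ℂ)
    have slice_B := sliceB_mul_mul (1 : Matrix a a ℂ) PB M (1 : Matrix r r ℂ)
    rw [transpose_one, Matrix.one_mul] at slice_A
    rw [transpose_one, one_kronecker_one, transpose_one, Matrix.mul_one (PB * _)] at slice_B
    rw [← slice_A, ← slice_B, norm_sliceA_sq, norm_sliceB_sq]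
  rw [joint, second, norm_sliceA_sq, hM] at parties
  rw [hM, ← Matrix.mul_assoc] at reference
  linarith

lemma re_trace_mul_conjTranspose_mul_mul_le {m r ρ : Type*} [Fintype m] [Fintype r] [Fintype ρ]
    [DecidableEq ρ] {M Y : Matrix m r ℂ} (hM : ‖M‖ = 1) (hY : ‖Y‖ ≤ 1) {P : Matrix r ρ ℂ}
    (hP : IsContraction P) {η : ℝ} (hη : 1 - η ≤ ‖M * P‖ ^ 2) :
    ((M * P)ᴴ * (Y * P)).trace.re ≤ (Mᴴ * Y).trace.re + √η := by
  have truncation : (Mᴴ * Y).trace - ((M * P)ᴴ * (Y * P)).trace =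
      ((M - M * (P * Pᴴ))ᴴ * Y).trace := by
    rw [conjTranspose_sub, Matrix.sub_mul, trace_sub, conjTranspose_mul M P, ← Matrix.mul_assoc,
      trace_mul_comm _ P, conjTranspose_mul, conjTranspose_mul, conjTranspose_conjTranspose]
    simp only [Matrix.mul_assoc]
  have distance : ‖M - M * (P * Pᴴ)‖ ≤ √η := by
    refine Real.le_sqrt_of_sq_le ((hP.norm_sub_mul_sq_le M).trans ?_)
    rw [hM]
    linarith
  have error : ‖((M - M * (P * Pᴴ))ᴴ * Y).trace‖ ≤ √η :=
    (norm_trace_conjTranspose_mul_le _ _).trans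
      ((mul_le_of_le_one_right (norm_nonneg _) hY).trans distance)
  rw [← truncation] at error
  have re_error := (Complex.abs_re_le_norm _).trans error
  rw [Complex.sub_re] at re_error
  linarith [neg_le_of_abs_le re_error]

lemma IsTypicalCompression.purity_sliceA_le {M : Matrix (a × b) r ℂ}
    {PA : Matrix α a ℂ} {η μ : ℝ} (hPA : IsTypicalCompression PA (sliceA M) η μ) {PB : Matrix β b ℂ}
    (hPB : IsContraction PB) {P : Matrix r ρ ℂ} (hP : IsContraction P) :
    purity (sliceA ((PA ⊗ₖ PB) * M * P)) ≤ μ := by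
  classical
  rw [sliceA_mul_mul]
  exact (purity_mul_le _ (hPB.kronecker hP.transpose).transpose).trans hPA.purity_le

lemma IsTypicalCompression.purity_sliceB_le {M : Matrix (a × b) r ℂ}
    {PB : Matrix β b ℂ} {η μ : ℝ} (hPB : IsTypicalCompression PB (sliceB M) η μ) {PA : Matrix α a ℂ}
    (hPA : IsContraction PA) {P : Matrix r ρ ℂ} (hP : IsContraction P) :
    purity (sliceB ((PA ⊗ₖ PB) * M * P)) ≤ μ := by
  classical
  rw [sliceB_mul_mul]
  exact (purity_mul_le _ (hPA.kronecker hP.transpose).transpose).trans hPB.purity_le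

end UnionBound

section OneShot

variable {γA ωA γB ωB ρ : Type*} [Fintype γA] [Fintype ωA] [Fintype γB] [Fintype ωB]

lemma sum_splitTransmitted_conjTranspose_mul_self (χ : Matrix ((γA × ωA) × (γB × ωB)) ρ ℂ)
    (z z' : ρ) :
    ∑ w, ((splitTransmitted χ)ᴴ * splitTransmitted χ) (z, w) (z', w) = (χᴴ * χ) z z' := by
  simp only [mul_apply, conjTranspose_apply, splitTransmitted_apply]
  rw [← Fintype.sum_prod_type']
  exact Fintype.sum_equiv
    ⟨fun p => ((p.2.1, p.1.1), (p.2.2, p.1.2)), fun q => ((q.1.2, q.2.2), (q.1.1, q.2.1)),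
      fun _ => rfl, fun _ => rfl⟩ _ _ fun _ => rfl

lemma trace_withEntanglement_compress [DecidableEq ωA] [DecidableEq ωB] [Fintype ρ]
    {m r : Type*} [Fintype m] [Fintype r] (K : Matrix ((γA × ωA) × (γB × ωB)) m ℂ)
    (M : Matrix m r ℂ) (P : Matrix r ρ ℂ)
    (U : Matrix ((γA × ωA) × (γB × ωB)) ((γA × ωA) × (γB × ωB)) ℂ)
    (Z : Matrix (((γA × ωA) × (γB × ωB)) × (ωA × ωB)) (γA × γB) ℂ) :
    ((withEntanglement (ωA × ωB) (K * M * P))ᴴ * Z * splitTransmitted (U * (K * M * P))).trace =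
      ((withEntanglement (ωA × ωB) M * (P ⊗ₖ (1 : Matrix (ωA × ωB) (ωA × ωB) ℂ)))ᴴ *
        ((K ⊗ₖ (1 : Matrix (ωA × ωB) (ωA × ωB) ℂ))ᴴ * Z * splitTransmitted (U * K * M) *
          (P ⊗ₖ (1 : Matrix (ωA × ωB) (ωA × ωB) ℂ)))).trace := by
  rw [withEntanglement_mul_right, withEntanglement_mul_left, Matrix.mul_assoc (K ⊗ₖ _),
    conjTranspose_mul (K ⊗ₖ (1 : Matrix (ωA × ωB) (ωA × ωB) ℂ)), ← Matrix.mul_assoc U,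
    ← Matrix.mul_assoc U, splitTransmitted_mul]
  simp only [Matrix.mul_assoc]

variable [Fintype ρ] [DecidableEq γA] [DecidableEq ωA] [DecidableEq γB] [DecidableEq ωB]
  [Nonempty γA] [Nonempty ωA] [Nonempty γB] [Nonempty ωB]

lemma exists_unitary_norm_sub_maximallyMixed_sq_le {χ : Matrix ((γA × ωA) × (γB × ωB)) ρ ℂ}
    (hχ : ‖χ‖ ≤ 1) {μA μB : ℝ} (hμA : purity (sliceA χ) ≤ μA) (hμB : purity (sliceB χ) ≤ μB) :
    ∃ (UA : Matrix (γA × ωA) (γA × ωA) ℂ) (UB : Matrix (γB × ωB) (γB × ωB) ℂ),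
      UAᴴ * UA = 1 ∧ UBᴴ * UB = 1 ∧
      ‖(splitTransmitted ((UA ⊗ₖ UB) * χ))ᴴ * splitTransmitted ((UA ⊗ₖ UB) * χ) -
          (χᴴ * χ) ⊗ₖ maximallyMixed (ωA × ωB)‖ ^ 2 ≤
        1 / (Fintype.card γA * Fintype.card γB) + μB / (Fintype.card γA * Fintype.card ωB) +
          μA / (Fintype.card ωA * Fintype.card γB) := by
  obtain ⟨UA, UB, hUA, hUB, bound⟩ := exists_unitary_purity_splitTransmitted_le χ
  refine ⟨UA, UB, hUA, hUB, ?_⟩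
  have gram : ((UA ⊗ₖ UB) * χ)ᴴ * ((UA ⊗ₖ UB) * χ) = χᴴ * χ := by
    rw [conjTranspose_mul, Matrix.mul_assoc, ← Matrix.mul_assoc _ (UA ⊗ₖ UB),
      kronecker_conjTranspose_mul_self_eq_one hUA hUB, Matrix.one_mul]
  have marginal : ∀ z z', ∑ w, ((splitTransmitted ((UA ⊗ₖ UB) * χ))ᴴ *
      splitTransmitted ((UA ⊗ₖ UB) * χ)) (z, w) (z', w) = (χᴴ * χ) z z' := by
    simpa only [gram] using sum_splitTransmitted_conjTranspose_mul_self ((UA ⊗ₖ UB) * χ)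
  rw [norm_sub_kronecker_maximallyMixed_sq marginal, ← norm_mul_conjTranspose_self,
    ← norm_mul_conjTranspose_self, ← purity, ← purity, Fintype.card_prod, Nat.cast_mul]
  calc _ ≤ ‖χ‖ ^ 4 / (Fintype.card γA * Fintype.card γB) +
        purity (sliceB χ) / (Fintype.card γA * Fintype.card ωB) +
        purity (sliceA χ) / (Fintype.card ωA * Fintype.card γB) := by linarith
    _ ≤ _ := by
        gcongr
        exact pow_le_one₀ (norm_nonneg _) hχ

/-- The squared dimension-weighted decoupling error of two encoders that transmit systems of
dimensions `cA` and `cB` and keep systems of dimensions `wA` and `wB`, for a state with reference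
dimension `dR` and marginal purities at most `μA` and `μB`. -/
noncomputable def decouplingError (dR cA wA cB wB : ℕ) (μA μB : ℝ) : ℝ :=
  dR * (wA * wB) * (1 / (cA * cB) + μB / (cA * wB) + μA / (wA * cB))

lemma exists_unitary_isContraction_le_re_trace {χ : Matrix ((γA × ωA) × (γB × ωB)) ρ ℂ}
    (hχ : ‖χ‖ ≤ 1) {μA μB : ℝ} (hμA : purity (sliceA χ) ≤ μA) (hμB : purity (sliceB χ) ≤ μB) :
    ∃ (UA : Matrix (γA × ωA) (γA × ωA) ℂ) (UB : Matrix (γB × ωB) (γB × ωB) ℂ)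
      (Z : Matrix (((γA × ωA) × (γB × ωB)) × (ωA × ωB)) (γA × γB) ℂ),
      UAᴴ * UA = 1 ∧ UBᴴ * UB = 1 ∧ IsContraction Z ∧
      ‖χ‖ ^ 2 - √(decouplingError (Fintype.card ρ) (Fintype.card γA) (Fintype.card ωA)
          (Fintype.card γB) (Fintype.card ωB) μA μB) / 2 ≤
        ((withEntanglement (ωA × ωB) χ)ᴴ * Z *
          splitTransmitted ((UA ⊗ₖ UB) * χ)).trace.re := by
  classical
  obtain ⟨UA, UB, hUA, hUB, decoupled⟩ := exists_unitary_norm_sub_maximallyMixed_sq_le hχ hμA hμB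
  obtain ⟨Z, hZ, overlap⟩ := exists_isContraction_le_re_trace (withEntanglement (ωA × ωB) χ)
    (splitTransmitted ((UA ⊗ₖ UB) * χ))
  refine ⟨UA, UB, Z, hUA, hUB, hZ, le_trans ?_ overlap⟩
  have norm_encoded : ‖splitTransmitted ((UA ⊗ₖ UB) * χ)‖ ^ 2 = ‖χ‖ ^ 2 := by
    rw [norm_splitTransmitted_sq, norm_mul_sq_of_conjTranspose_mul_self
      (kronecker_conjTranspose_mul_self_eq_one hUA hUB)]
  have distance := Real.le_sqrt_of_sq_le decoupled
  rw [norm_encoded, norm_withEntanglement, withEntanglement_conjTranspose_mul_self,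
    decouplingError, Real.sqrt_mul (by positivity), Fintype.card_prod, Fintype.card_prod,
    Nat.cast_mul, Nat.cast_mul]
  have scaled := mul_le_mul_of_nonneg_left distance
    (Real.sqrt_nonneg (Fintype.card ρ * (Fintype.card ωA * Fintype.card ωB)))
  linarith

variable {a b r : Type*} [Fintype a] [Fintype b] [Fintype r]
  [DecidableEq a] [DecidableEq b] [DecidableEq r]

lemma exists_isContraction_le_re_trace_of_isTypicalCompression {M : Matrix (a × b) r ℂ}
    (hM : ‖M‖ = 1) {PA : Matrix (γA × ωA) a ℂ} {PB : Matrix (γB × ωB) b ℂ} {P : Matrix ρ r ℂ}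
    {η μA μB : ℝ} (hA : IsTypicalCompression PA (sliceA M) η μA)
    (hB : IsTypicalCompression PB (sliceB M) η μB) (hP : IsContraction P)
    (hR : 1 - η ≤ ‖P * Mᵀ‖ ^ 2) :
    ∃ (EA : Matrix (γA × ωA) a ℂ) (EB : Matrix (γB × ωB) b ℂ)
      (D : Matrix ((a × b) × (ωA × ωB)) (γA × γB) ℂ),
      IsContraction EA ∧ IsContraction EB ∧ IsContraction D ∧
      1 - 3 * η - √η - √(decouplingError (Fintype.card ρ) (Fintype.card γA)
          (Fintype.card ωA) (Fintype.card γB) (Fintype.card ωB) μA μB) / 2 ≤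
        ((withEntanglement (ωA × ωB) M)ᴴ * (D * splitTransmitted ((EA ⊗ₖ EB) * M))).trace.re := by
  classical
  have hPt := hP.transpose
  have hK := hA.isContraction.kronecker hB.isContraction
  have hMP : ‖P * Mᵀ‖ = ‖M * Pᵀ‖ := by
    rw [← frobenius_norm_transpose, transpose_mul, transpose_transpose]
  have weight := one_sub_add_le_norm_kronecker_mul_mul_sq hM hA.isContraction hB.isContraction hPt
    hA.le_norm_sq hB.le_norm_sq (hMP ▸ hR)
  have norm_le_one : ‖(PA ⊗ₖ PB) * M * Pᵀ‖ ≤ 1 :=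
    (hPt.norm_mul_le' _).trans ((hK.norm_mul_le M).trans_eq hM)
  obtain ⟨UA, UB, Z, hUA, hUB, hZ, overlap⟩ :=
    exists_unitary_isContraction_le_re_trace norm_le_one
      (hA.purity_sliceA_le hB.isContraction hPt) (hB.purity_sliceB_le hA.isContraction hPt)
  have hEA := (IsContraction.of_conjTranspose_mul_self hUA).mul hA.isContraction
  have hEB := (IsContraction.of_conjTranspose_mul_self hUB).mul hB.isContraction
  have hD := (hK.kronecker (IsContraction.one (m := ωA × ωB))).conjTranspose.mul hZ
  refine ⟨UA * PA, UB * PB, _, hEA, hEB, hD, ?_⟩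
  have decoded_le : ‖((PA ⊗ₖ PB) ⊗ₖ (1 : Matrix (ωA × ωB) (ωA × ωB) ℂ))ᴴ * Z *
      splitTransmitted (((UA * PA) ⊗ₖ (UB * PB)) * M)‖ ≤ 1 := by
    refine (hD.norm_mul_le _).trans ?_
    rw [(sq_eq_sq₀ (norm_nonneg _) (norm_nonneg _)).1 (norm_splitTransmitted_sq _)]
    exact ((hEA.kronecker hEB).norm_mul_le M).trans_eq hM
  rw [trace_withEntanglement_compress, ← mul_kronecker_mul] at overlap
  have reference_weight :
      1 - η ≤ ‖withEntanglement (ωA × ωB) M * (Pᵀ ⊗ₖ (1 : Matrix (ωA × ωB) (ωA × ωB) ℂ))‖ ^ 2 := by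
    rwa [← withEntanglement_mul_right, norm_withEntanglement, ← hMP]
  have truncated := re_trace_mul_conjTranspose_mul_mul_le
    ((norm_withEntanglement M).trans hM) decoded_le
    (hPt.kronecker (IsContraction.one (m := ωA × ωB))) reference_weight
  linarith

end OneShot

section Fidelity

lemma dotProduct_partialTrace_mulVec {i w : Type*} [Fintype i] [Fintype w] (ψ : i → ℂ)
    (v : i × w → ℂ) :
    star ψ ⬝ᵥ ((of fun x y => ∑ z, vecMulVec v (star v) (x, z) (y, z)) *ᵥ ψ) =
      ((∑ z, ‖∑ x, star (ψ x) * v (x, z)‖ ^ 2 : ℝ) : ℂ) := by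
  have expand : ∀ z, ((‖∑ x, star (ψ x) * v (x, z)‖ ^ 2 : ℝ) : ℂ) =
      ∑ x, ∑ y, star (ψ x) * (v (x, z) * star (v (y, z)) * ψ y) := fun z => by
    rw [← Complex.normSq_eq_norm_sq, ← Complex.mul_conj, ← Complex.star_def, star_sum,
      Finset.sum_mul_sum]
    refine Finset.sum_congr rfl fun x _ => Finset.sum_congr rfl fun y _ => ?_
    rw [star_mul', star_star]
    ring
  simp only [Complex.ofReal_sum, expand, dotProduct, mulVec, of_apply, vecMulVec_apply,
    Pi.star_apply, Finset.mul_sum, Finset.sum_mul]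
  rw [Finset.sum_comm (s := (Finset.univ : Finset w))]
  exact Finset.sum_congr rfl fun x _ => Finset.sum_comm

variable {ιA ιB ιR : Type} {n : ℕ}

/-- The amplitudes of `n` copies of `φ`, with the compressed systems as rows and the reference as
columns. -/
noncomputable def sourceMatrix (φ : ιA × (ιB × ιR) → ℂ) (n : ℕ) :
    Matrix ((Fin n → ιA) × (Fin n → ιB)) (Fin n → ιR) ℂ :=
  of fun x z => iidVec φ n (z, x)

variable [Fintype ιA] [Fintype ιB] [Fintype ιR] [DecidableEq ιR] {γA ωA γB ωB ωC : Type}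
  [Fintype γA] [Fintype γB]

lemma codeMap_mulVec_iidVec (φ : ιA × (ιB × ιR) → ℂ) (EA : Matrix (γA × ωA) (Fin n → ιA) ℂ)
    (EB : Matrix (γB × ωB) (Fin n → ιB) ℂ)
    (D : Matrix (((Fin n → ιA) × (Fin n → ιB)) × ωC) (γA × γB) ℂ) (z : Fin n → ιR)
    (x : (Fin n → ιA) × (Fin n → ιB)) (w : (ωA × ωB) × ωC) :
    (codeMap (ιR := ιR) EA EB D *ᵥ iidVec φ n) ((z, x), w) =
      (D * splitTransmitted ((EA ⊗ₖ EB) * sourceMatrix φ n)) (x, w.2) (z, w.1) := by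
  simp only [mulVec, dotProduct, codeMap, of_apply, mul_apply, splitTransmitted_apply,
    kroneckerMap_apply, sourceMatrix]
  rw [Fintype.sum_prod_type, Finset.sum_eq_single z (fun z' _ hz' => by simp [hz'.symm]) (by simp)]
  simp only [if_true, Finset.sum_mul, Finset.mul_sum]
  rw [Finset.sum_comm (s := (Finset.univ : Finset (γA × γB)))]
  refine Finset.sum_congr rfl fun y _ => ?_
  rw [Fintype.sum_prod_type (α₁ := γA) (α₂ := γB)]
  refine Finset.sum_congr rfl fun c _ => Finset.sum_congr rfl fun c' _ => ?_
  ring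

variable [Fintype ωA] [Fintype ωB] [Fintype ωC]

lemma codeFidelity_eq_sum (φ : ιA × (ιB × ιR) → ℂ) (EA : Matrix (γA × ωA) (Fin n → ιA) ℂ)
    (EB : Matrix (γB × ωB) (Fin n → ιB) ℂ)
    (D : Matrix (((Fin n → ιA) × (Fin n → ιB)) × ωC) (γA × γB) ℂ) :
    codeFidelity φ EA EB D = ∑ w : (ωA × ωB) × ωC, ‖∑ z, ∑ x, star (sourceMatrix φ n x z) *
      (D * splitTransmitted ((EA ⊗ₖ EB) * sourceMatrix φ n)) (x, w.2) (z, w.1)‖ ^ 2 := by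
  have amplitude : ∀ w, ∑ z, ∑ x, star (sourceMatrix φ n x z) *
      (D * splitTransmitted ((EA ⊗ₖ EB) * sourceMatrix φ n)) (x, w.2) (z, w.1) =
      ∑ i, star (iidVec φ n i) * (codeMap (ιR := ιR) EA EB D *ᵥ iidVec φ n) (i, w) := fun w => by
    simp only [← codeMap_mulVec_iidVec, Fintype.sum_prod_type (α₁ := Fin n → ιR)]
    rfl
  simp only [amplitude, codeFidelity, mul_vecMulVec, vecMulVec_mul, ← star_mulVec]
  rw [dotProduct_partialTrace_mulVec, Complex.ofReal_re]

lemma exists_isometry_sq_le_codeFidelity [DecidableEq ιA] [DecidableEq ιB] [DecidableEq γA]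
    [DecidableEq γB] [DecidableEq ωA] [DecidableEq ωB] [Nonempty γA] [Nonempty γB] [Nonempty ιA]
    [Nonempty ιB] (φ : ιA × (ιB × ιR) → ℂ) {KA : Matrix (γA × ωA) (Fin n → ιA) ℂ}
    {KB : Matrix (γB × ωB) (Fin n → ιB) ℂ}
    {Z : Matrix (((Fin n → ιA) × (Fin n → ιB)) × (ωA × ωB)) (γA × γB) ℂ}
    (hKA : IsContraction KA) (hKB : IsContraction KB) (hZ : IsContraction Z) :
    ∃ (dA dB dC : ℕ) (EA : Matrix (γA × Fin dA) (Fin n → ιA) ℂ)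
      (EB : Matrix (γB × Fin dB) (Fin n → ιB) ℂ)
      (D : Matrix (((Fin n → ιA) × (Fin n → ιB)) × Fin dC) (γA × γB) ℂ),
      EAᴴ * EA = 1 ∧ EBᴴ * EB = 1 ∧ Dᴴ * D = 1 ∧
      ‖((withEntanglement (ωA × ωB) (sourceMatrix φ n))ᴴ *
        (Z * splitTransmitted ((KA ⊗ₖ KB) * sourceMatrix φ n))).trace‖ ^ 2 ≤
        codeFidelity φ EA EB D := by
  obtain ⟨dA, eA, EA, hEA, EA_extends⟩ := hKA.exists_isometry
  obtain ⟨dB, eB, EB, hEB, EB_extends⟩ := hKB.exists_isometry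
  obtain ⟨dC, eC, D, hD, D_extends⟩ := hZ.exists_isometry
  refine ⟨dA, dB, dC, EA, EB, D, hEA, hEB, hD, ?_⟩
  let emb : ωA × ωB ↪ (Fin dA × Fin dB) × Fin dC :=
    ⟨fun w => ((eA w.1, eB w.2), eC w), fun w w' h => eC.injective (congrArg Prod.snd h)⟩
  have emb_apply : ∀ w, emb w = ((eA w.1, eB w.2), eC w) := fun _ => rfl
  let amplitude : (Fin dA × Fin dB) × Fin dC → ℂ := fun w => ∑ z, ∑ x,
    star (sourceMatrix φ n x z) *
      (D * splitTransmitted ((EA ⊗ₖ EB) * sourceMatrix φ n)) (x, w.2) (z, w.1)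
  have extends_code : ∀ x z w,
      (D * splitTransmitted ((EA ⊗ₖ EB) * sourceMatrix φ n)) (x, (emb w).2) (z, (emb w).1) =
        (Z * splitTransmitted ((KA ⊗ₖ KB) * sourceMatrix φ n)) (x, w) (z, w) := fun x z w => by
    simp only [mul_apply, splitTransmitted_apply, kroneckerMap_apply, emb_apply,
      EA_extends, EB_extends, D_extends]
  refine (norm_sq_trace_withEntanglement_conjTranspose_mul_le _ _).trans ?_
  rw [codeFidelity_eq_sum]
  simp only [← extends_code]
  exact (Finset.sum_map Finset.univ emb fun w => ‖amplitude w‖ ^ 2).symm.trans_le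
    (Finset.sum_le_sum_of_subset_of_nonneg (Finset.subset_univ _) fun _ _ _ => by positivity)

end Fidelity

section Entropy

variable {m n : Type*} [Fintype m] [Fintype n] [DecidableEq m] [DecidableEq n]

/-- Shannon entropy, in bits, of a finite distribution. -/
noncomputable def shannonEntropy (p : n → ℝ) : ℝ := ∑ i, -(p i * Real.logb 2 (p i))

lemma vnEntropy_eq_shannonEntropy {M : Matrix n n ℂ} (h : M.IsHermitian) :
    vnEntropy M = shannonEntropy h.eigenvalues :=
  dif_pos h

lemma vnEntropy_eq_sum_roots_charpoly {M : Matrix n n ℂ} (h : M.IsHermitian) :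
    vnEntropy M = (M.charpoly.roots.map fun z => -(z.re * Real.logb 2 z.re)).sum := by
  rw [vnEntropy_eq_shannonEntropy h, h.roots_charpoly_eq_eigenvalues, Multiset.map_map]
  rfl

lemma sum_map_roots_X_pow_mul {p : Polynomial ℂ} (hp : p ≠ 0) (k : ℕ) {f : ℂ → ℝ} (hf : f 0 = 0) :
    ((Polynomial.X ^ k * p).roots.map f).sum = (p.roots.map f).sum := by
  rw [Polynomial.roots_mul (mul_ne_zero (pow_ne_zero _ Polynomial.X_ne_zero) hp),
    Polynomial.roots_X_pow, Multiset.map_add, Multiset.sum_add, Multiset.map_nsmul,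
    Multiset.map_singleton, hf, Multiset.sum_nsmul, Multiset.sum_singleton, smul_zero, zero_add]

lemma vnEntropy_transpose_mul_conjTranspose (X : Matrix m n ℂ) :
    vnEntropy (Xᵀ * Xᵀᴴ) = vnEntropy (X * Xᴴ) := by
  have transposed : Xᵀ * Xᵀᴴ = (Xᴴ * X)ᵀ := by
    rw [transpose_mul]
    rfl
  rw [vnEntropy_eq_sum_roots_charpoly (isHermitian_mul_conjTranspose_self _),
    vnEntropy_eq_sum_roots_charpoly (isHermitian_mul_conjTranspose_self _), transposed,
    charpoly_transpose,
    ← sum_map_roots_X_pow_mul (charpoly_monic (Xᴴ * X)).ne_zero (Fintype.card m) (by simp),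
    ← charpoly_mul_comm', sum_map_roots_X_pow_mul (charpoly_monic _).ne_zero _ (by simp)]

end Entropy

section TensorPower

variable {a b c : Type*}

/-- The `n`-fold tensor power of a matrix. -/
def tensorPower (n : ℕ) (M : Matrix a b ℂ) : Matrix (Fin n → a) (Fin n → b) ℂ :=
  of fun x y => ∏ k, M (x k) (y k)

lemma tensorPower_mul [Fintype b] (n : ℕ) (M : Matrix a b ℂ) (N : Matrix b c ℂ) :
    tensorPower n (M * N) = tensorPower n M * tensorPower n N := by
  ext x y
  simp only [tensorPower, of_apply, mul_apply, ← Finset.prod_mul_distrib, Fintype.prod_sum]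

lemma tensorPower_conjTranspose (n : ℕ) (M : Matrix a b ℂ) :
    tensorPower n Mᴴ = (tensorPower n M)ᴴ := by
  ext x y
  simp only [tensorPower, of_apply, conjTranspose_apply, star_prod]

lemma trace_tensorPower [Fintype a] (n : ℕ) (M : Matrix a a ℂ) :
    (tensorPower n M).trace = M.trace ^ n := by
  simp only [trace, diag_apply, tensorPower, of_apply, Fintype.sum_pow]

lemma tensorPower_diagonal [DecidableEq a] (n : ℕ) (d : a → ℂ) :
    tensorPower n (diagonal d) = diagonal fun x => ∏ k, d (x k) := by
  ext x y
  rw [tensorPower, of_apply, diagonal_apply]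
  split_ifs with h
  · simp only [h, diagonal_apply_eq]
  · obtain ⟨k, hk⟩ := Function.ne_iff.1 h
    exact Finset.prod_eq_zero (Finset.mem_univ k) (diagonal_apply_ne _ hk)

lemma tensorPower_one [DecidableEq a] (n : ℕ) : tensorPower n (1 : Matrix a a ℂ) = 1 := by
  simp only [← diagonal_one, tensorPower_diagonal, Finset.prod_const_one]

end TensorPower

section Source

variable {ιA ιB ιR : Type}

/-- The amplitudes of one copy of `φ`, with the compressed systems as rows and the reference as
columns. -/
def amplitudeMatrix (φ : ιA × (ιB × ιR) → ℂ) : Matrix (ιA × ιB) ιR ℂ :=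
  of fun x z => φ (x.1, (x.2, z))

variable (φ : ιA × (ιB × ιR) → ℂ)

lemma redA_eq [Fintype ιB] [Fintype ιR] :
    redA φ = sliceA (amplitudeMatrix φ) * (sliceA (amplitudeMatrix φ))ᴴ := rfl

lemma redB_eq [Fintype ιA] [Fintype ιR] :
    redB φ = sliceB (amplitudeMatrix φ) * (sliceB (amplitudeMatrix φ))ᴴ := by
  ext y y'
  simp only [redB, of_apply, mul_apply, Fintype.sum_prod_type]
  rfl

lemma redR_eq [Fintype ιA] [Fintype ιB] :
    redR φ = (amplitudeMatrix φ)ᵀ * (amplitudeMatrix φ)ᵀᴴ := by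
  ext z z'
  simp only [redR, of_apply, mul_apply, Fintype.sum_prod_type]
  rfl

lemma posSemidef_redA [Finite ιA] [Fintype ιB] [Fintype ιR] : (redA φ).PosSemidef :=
  redA_eq φ ▸ posSemidef_self_mul_conjTranspose _

lemma posSemidef_redB [Finite ιB] [Fintype ιA] [Fintype ιR] : (redB φ).PosSemidef :=
  redB_eq φ ▸ posSemidef_self_mul_conjTranspose _

lemma posSemidef_redR [Finite ιR] [Fintype ιA] [Fintype ιB] : (redR φ).PosSemidef :=
  redR_eq φ ▸ posSemidef_self_mul_conjTranspose _

lemma sliceA_sourceMatrix_mul_conjTranspose [Fintype ιB] [Fintype ιR] (n : ℕ) :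
    sliceA (sourceMatrix φ n) * (sliceA (sourceMatrix φ n))ᴴ = tensorPower n (redA φ) := by
  rw [redA_eq, tensorPower_mul, tensorPower_conjTranspose]
  ext x y
  exact (Equiv.sum_comp (Equiv.arrowProdEquivProdArrow (Fin n) (fun _ => ιB) fun _ => ιR) _).symm

lemma sliceB_sourceMatrix_mul_conjTranspose [Fintype ιA] [Fintype ιR] (n : ℕ) :
    sliceB (sourceMatrix φ n) * (sliceB (sourceMatrix φ n))ᴴ = tensorPower n (redB φ) := by
  rw [redB_eq, tensorPower_mul, tensorPower_conjTranspose]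
  ext x y
  exact (Equiv.sum_comp (Equiv.arrowProdEquivProdArrow (Fin n) (fun _ => ιA) fun _ => ιR) _).symm

lemma transpose_sourceMatrix_mul_conjTranspose [Fintype ιA] [Fintype ιB] (n : ℕ) :
    (sourceMatrix φ n)ᵀ * (sourceMatrix φ n)ᵀᴴ = tensorPower n (redR φ) := by
  rw [redR_eq, tensorPower_mul, tensorPower_conjTranspose]
  ext x y
  exact (Equiv.sum_comp (Equiv.arrowProdEquivProdArrow (Fin n) (fun _ => ιA) fun _ => ιB) _).symm

variable [Fintype ιA] [Fintype ιB] [Fintype ιR]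

lemma vnEntropy_redAB [DecidableEq ιA] [DecidableEq ιB] [DecidableEq ιR] :
    vnEntropy (redAB φ) = vnEntropy (redR φ) := by
  rw [redR_eq, vnEntropy_transpose_mul_conjTranspose]
  rfl

lemma vnEntropy_redAR [DecidableEq ιA] [DecidableEq ιB] [DecidableEq ιR] :
    vnEntropy (redAR φ) = vnEntropy (redB φ) := by
  rw [redB_eq, ← vnEntropy_transpose_mul_conjTranspose]
  rfl

lemma vnEntropy_redBR [DecidableEq ιA] [DecidableEq ιB] [DecidableEq ιR] :
    vnEntropy (redBR φ) = vnEntropy (redA φ) := by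
  rw [redA_eq, ← vnEntropy_transpose_mul_conjTranspose]
  rfl

lemma trace_mul_conjTranspose_self {m n : Type*} [Fintype m] [Fintype n] (X : Matrix m n ℂ) :
    (X * Xᴴ).trace = (‖X‖ ^ 2 : ℝ) := by
  rw [trace_mul_comm, trace_conjTranspose_mul_self]

variable {φ}

lemma norm_amplitudeMatrix (hφ : star φ ⬝ᵥ φ = 1) : ‖amplitudeMatrix φ‖ = 1 := by
  have norm_sq : ((‖amplitudeMatrix φ‖ ^ 2 : ℝ) : ℂ) = 1 := by
    rw [← hφ, ← norm_sliceA_sq, frobenius_norm_sq, dotProduct, Fintype.sum_prod_type,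
      Complex.ofReal_sum]
    refine Finset.sum_congr rfl fun x _ => ?_
    rw [Complex.ofReal_sum]
    refine Finset.sum_congr rfl fun q _ => ?_
    rw [Complex.ofReal_pow, ← Complex.conj_mul']
    rfl
  exact (pow_eq_one_iff_of_nonneg (norm_nonneg _) two_ne_zero).1 (by exact_mod_cast norm_sq)

lemma trace_redA (hφ : star φ ⬝ᵥ φ = 1) : (redA φ).trace = 1 := by
  rw [redA_eq, trace_mul_conjTranspose_self, norm_sliceA_sq, norm_amplitudeMatrix hφ]
  simp only [one_pow, Complex.ofReal_one]

lemma trace_redB (hφ : star φ ⬝ᵥ φ = 1) : (redB φ).trace = 1 := by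
  rw [redB_eq, trace_mul_conjTranspose_self, norm_sliceB_sq, norm_amplitudeMatrix hφ]
  simp only [one_pow, Complex.ofReal_one]

lemma trace_redR (hφ : star φ ⬝ᵥ φ = 1) : (redR φ).trace = 1 := by
  rw [redR_eq, trace_mul_conjTranspose_self, frobenius_norm_transpose, norm_amplitudeMatrix hφ]
  simp only [one_pow, Complex.ofReal_one]

lemma norm_sourceMatrix (hφ : star φ ⬝ᵥ φ = 1) (n : ℕ) : ‖sourceMatrix φ n‖ = 1 := by
  have norm_sq : ((‖sourceMatrix φ n‖ ^ 2 : ℝ) : ℂ) = 1 := by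
    rw [← norm_sliceA_sq, ← trace_mul_conjTranspose_self, sliceA_sourceMatrix_mul_conjTranspose,
      trace_tensorPower, trace_redA hφ, one_pow]
  exact (pow_eq_one_iff_of_nonneg (norm_nonneg _) two_ne_zero).1 (by exact_mod_cast norm_sq)

end Source

section Typicality

variable {a : Type*} [Fintype a]

/-- The sequences of length `n` whose probability under the product distribution of `p` lies within
a factor `2 ^ (n * δ)` of `2 ^ (-n * H(p))`. -/
noncomputable def typicalSet (p : a → ℝ) (n : ℕ) (δ : ℝ) : Finset (Fin n → a) :=
  open Classical in Finset.univ.filter fun x =>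
    (2 : ℝ) ^ (-(n * (shannonEntropy p + δ))) ≤ ∏ k, p (x k) ∧
      ∏ k, p (x k) ≤ (2 : ℝ) ^ (-(n * (shannonEntropy p - δ)))

lemma mem_typicalSet {p : a → ℝ} {n : ℕ} {δ : ℝ} {x : Fin n → a} :
    x ∈ typicalSet p n δ ↔ (2 : ℝ) ^ (-(n * (shannonEntropy p + δ))) ≤ ∏ k, p (x k) ∧
      ∏ k, p (x k) ≤ (2 : ℝ) ^ (-(n * (shannonEntropy p - δ))) := by
  simp only [typicalSet, Finset.mem_filter, Finset.mem_univ, true_and]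

lemma sum_prod_mul_apply_mul_apply {n : ℕ} {p u : a → ℝ} (hp : ∑ i, p i = 1)
    (hu : ∑ i, p i * u i = 0) (k l : Fin n) :
    ∑ x : Fin n → a, (∏ j, p (x j)) * (u (x k) * u (x l)) =
      if k = l then ∑ i, p i * u i ^ 2 else 0 := by
  have factor : ∀ x : Fin n → a, (∏ j, p (x j)) * (u (x k) * u (x l)) =
      ∏ j, p (x j) * ((if j = k then u (x j) else 1) * if j = l then u (x j) else 1) := fun x => by
    simp only [Finset.prod_mul_distrib, Finset.prod_ite_eq', Finset.mem_univ, if_true]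
  simp only [factor]
  rw [← Fintype.prod_sum fun j z => p z * ((if j = k then u z else 1) * if j = l then u z else 1)]
  split_ifs with hkl
  · subst hkl
    rw [Finset.prod_eq_single k (fun j _ hj => by simp [hj, hp]) (by simp)]
    simp [pow_two]
  · exact Finset.prod_eq_zero (Finset.mem_univ k) (by simp [hkl, hu])

lemma sum_prod_mul_sum_sq (n : ℕ) {p u : a → ℝ} (hp : ∑ i, p i = 1) (hu : ∑ i, p i * u i = 0) :
    ∑ x : Fin n → a, (∏ j, p (x j)) * (∑ k, u (x k)) ^ 2 = n * ∑ i, p i * u i ^ 2 := by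
  have expand : ∀ x : Fin n → a, (∏ j, p (x j)) * (∑ k, u (x k)) ^ 2 =
      ∑ k, ∑ l, (∏ j, p (x j)) * (u (x k) * u (x l)) := fun x => by
    rw [pow_two, Finset.sum_mul_sum, Finset.mul_sum]
    simp only [Finset.mul_sum]
  have diagonal : ∀ k : Fin n, ∑ x : Fin n → a, ∑ l, (∏ j, p (x j)) * (u (x k) * u (x l)) =
      ∑ i, p i * u i ^ 2 := fun k => by
    rw [Finset.sum_comm]
    simp only [sum_prod_mul_apply_mul_apply hp hu, Finset.sum_ite_eq, Finset.mem_univ, if_true]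
  simp only [expand]
  rw [Finset.sum_comm]
  simp only [diagonal, Finset.sum_const, Finset.card_univ, Fintype.card_fin, nsmul_eq_mul]

lemma sum_typicalSet_le_one {p : a → ℝ} (hp : ∀ i, 0 ≤ p i) (hp1 : ∑ i, p i = 1) (n : ℕ) (δ : ℝ) :
    ∑ x ∈ typicalSet p n δ, ∏ k, p (x k) ≤ 1 := by
  refine (Finset.sum_le_univ_sum_of_nonneg fun x => Finset.prod_nonneg fun k _ => hp _).trans_eq ?_
  rw [← Fintype.sum_pow, hp1, one_pow]

lemma card_typicalSet_le {p : a → ℝ} (hp : ∀ i, 0 ≤ p i) (hp1 : ∑ i, p i = 1) (n : ℕ) (δ : ℝ) :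
    ((typicalSet p n δ).card : ℝ) ≤ 2 ^ (n * (shannonEntropy p + δ)) := by
  have lower := (Finset.card_nsmul_le_sum _ _ _ fun x hx => (mem_typicalSet.1 hx).1).trans
    (sum_typicalSet_le_one hp hp1 n δ)
  rwa [nsmul_eq_mul, Real.rpow_neg zero_le_two, ← div_eq_mul_inv, div_le_one (by positivity)]
    at lower

lemma sum_sq_typicalSet_le {p : a → ℝ} (hp : ∀ i, 0 ≤ p i) (hp1 : ∑ i, p i = 1) (n : ℕ) (δ : ℝ) :
    ∑ x ∈ typicalSet p n δ, (∏ k, p (x k)) ^ 2 ≤ 2 ^ (-(n * (shannonEntropy p - δ))) := by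
  calc _ ≤ ∑ x ∈ typicalSet p n δ,
        (2 : ℝ) ^ (-(n * (shannonEntropy p - δ))) * ∏ k, p (x k) := by
        refine Finset.sum_le_sum fun x hx => ?_
        rw [pow_two]
        exact mul_le_mul_of_nonneg_right (mem_typicalSet.1 hx).2
          (Finset.prod_nonneg fun k _ => hp _)
    _ ≤ _ := by
        rw [← Finset.mul_sum]
        exact mul_le_of_le_one_right (by positivity) (sum_typicalSet_le_one hp hp1 n δ)

/-- The surprisal `-log₂ (p i)`, centred at its mean `H(p)`. -/
noncomputable def centeredSurprisal (p : a → ℝ) (i : a) : ℝ :=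
  -Real.logb 2 (p i) - shannonEntropy p

lemma sum_mul_centeredSurprisal {p : a → ℝ} (hp1 : ∑ i, p i = 1) :
    ∑ i, p i * centeredSurprisal p i = 0 := by
  simp only [centeredSurprisal, mul_sub, Finset.sum_sub_distrib, ← Finset.sum_mul, hp1, one_mul,
    shannonEntropy, mul_neg, sub_self]

lemma prod_eq_two_rpow_neg {p : a → ℝ} {n : ℕ} {x : Fin n → a} (hx : ∀ k, 0 < p (x k)) :
    ∏ k, p (x k) = 2 ^ (-(∑ k, centeredSurprisal p (x k) + n * shannonEntropy p)) := by
  have exponent : -(∑ k, centeredSurprisal p (x k) + n * shannonEntropy p) =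
      ∑ k, Real.logb 2 (p (x k)) := by
    simp only [centeredSurprisal, Finset.sum_sub_distrib, Finset.sum_neg_distrib, Finset.sum_const,
      Finset.card_univ, Fintype.card_fin, nsmul_eq_mul]
    ring
  rw [exponent, Real.rpow_sum_of_pos two_pos]
  exact Finset.prod_congr rfl fun k _ =>
    (Real.rpow_logb two_pos (OfNat.ofNat_ne_one 2) (hx k)).symm

lemma mem_typicalSet_of_abs_le {p : a → ℝ} {n : ℕ} {δ : ℝ} {x : Fin n → a}
    (hx : ∀ k, 0 < p (x k)) (hδ : |∑ k, centeredSurprisal p (x k)| ≤ n * δ) :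
    x ∈ typicalSet p n δ := by
  obtain ⟨lower, upper⟩ := abs_le.1 hδ
  rw [mem_typicalSet, prod_eq_two_rpow_neg hx]
  constructor <;> refine Real.rpow_le_rpow_of_exponent_le one_le_two ?_ <;> linarith

lemma one_sub_div_le_sum_typicalSet {p : a → ℝ} (hp : ∀ i, 0 ≤ p i) (hp1 : ∑ i, p i = 1) {n : ℕ}
    (hn : 0 < n) {δ : ℝ} (hδ : 0 < δ) :
    1 - (∑ i, p i * centeredSurprisal p i ^ 2) / (n * δ ^ 2) ≤
      ∑ x ∈ typicalSet p n δ, ∏ k, p (x k) := by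
  classical
  set T := typicalSet p n δ
  have prob_nonneg : ∀ x : Fin n → a, 0 ≤ ∏ k, p (x k) := fun x =>
    Finset.prod_nonneg fun k _ => hp _
  have deviation : ∀ x ∈ Tᶜ, (∏ k, p (x k)) * (n * δ) ^ 2 ≤
      (∏ k, p (x k)) * (∑ k, centeredSurprisal p (x k)) ^ 2 := fun x hx => by
    rcases (prob_nonneg x).eq_or_lt with zero | pos
    · rw [← zero, zero_mul, zero_mul]
    · have factor_pos : ∀ k, 0 < p (x k) := fun k =>
        (hp _).lt_of_ne' fun h => pos.ne' (Finset.prod_eq_zero (Finset.mem_univ k) h)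
      refine mul_le_mul_of_nonneg_left (sq_le_sq.2 ?_) pos.le
      rw [abs_of_nonneg (by positivity)]
      exact le_of_not_ge fun h => Finset.mem_compl.1 hx (mem_typicalSet_of_abs_le factor_pos h)
  have tail : (∑ x ∈ Tᶜ, ∏ k, p (x k)) * (n * δ) ^ 2 ≤
      n * ∑ i, p i * centeredSurprisal p i ^ 2 := by
    rw [← sum_prod_mul_sum_sq n hp1 (sum_mul_centeredSurprisal hp1), Finset.sum_mul]
    exact (Finset.sum_le_sum deviation).trans
      (Finset.sum_le_univ_sum_of_nonneg fun x => mul_nonneg (prob_nonneg x) (sq_nonneg _))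
  have total : ∑ x ∈ T, ∏ k, p (x k) + ∑ x ∈ Tᶜ, ∏ k, p (x k) = 1 := by
    rw [Finset.sum_add_sum_compl, ← Fintype.sum_pow, hp1, one_pow]
  have cancel : ∑ x ∈ Tᶜ, ∏ k, p (x k) ≤
      (∑ i, p i * centeredSurprisal p i ^ 2) / (n * δ ^ 2) := by
    rw [le_div_iff₀ (by positivity)]
    refine le_of_mul_le_mul_left (tail.trans' (le_of_eq ?_)) (Nat.cast_pos (α := ℝ).2 hn)
    ring
  linarith

lemma eventually_one_sub_le_sum_typicalSet {p : a → ℝ} (hp : ∀ i, 0 ≤ p i) (hp1 : ∑ i, p i = 1)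
    {δ η : ℝ} (hδ : 0 < δ) (hη : 0 < η) :
    ∀ᶠ n : ℕ in atTop, 1 - η ≤ ∑ x ∈ typicalSet p n δ, ∏ k, p (x k) := by
  have small : ∀ᶠ n : ℕ in atTop,
      (∑ i, p i * centeredSurprisal p i ^ 2) / (n * δ ^ 2) < η := by
    refine Tendsto.eventually_lt_const hη (Tendsto.const_div_atTop ?_ _)
    exact tendsto_natCast_atTop_atTop.atTop_mul_const (by positivity)
  filter_upwards [small, eventually_gt_atTop 0] with n hsmall hn
  linarith [one_sub_div_le_sum_typicalSet hp hp1 hn hδ]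

end Typicality

section SpectralProjection

variable {a q α : Type*} [Fintype a] [Fintype q] [Fintype α] [DecidableEq a]

lemma norm_diagonal_ofReal_sq (d : a → ℝ) :
    ‖diagonal fun x => (d x : ℂ)‖ ^ 2 = ∑ x, d x ^ 2 := by
  simp only [frobenius_norm_diagonal, EuclideanSpace.norm_sq_eq, Complex.norm_real,
    Real.norm_eq_abs, sq_abs]

lemma exists_isContraction_gram_eq_diagonal {Y : Matrix a q ℂ} {U : Matrix a a ℂ} (hU : Uᴴ * U = 1)
    {d : a → ℂ} (hY : Y * Yᴴ = U * diagonal d * Uᴴ) (T : Finset a) :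
    ∃ R : Matrix T a ℂ, IsContraction R ∧
      (R * Y) * (R * Y)ᴴ = diagonal fun x : T => d x := by
  let S : Matrix T a ℂ := (1 : Matrix a a ℂ).submatrix Subtype.val id
  have S_mul (A : Matrix a a ℂ) : S * A * Sᴴ = A.submatrix Subtype.val Subtype.val := by
    rw [conjTranspose_submatrix, conjTranspose_one, ← submatrix_id_id A]
    simp only [S, ← submatrix_mul _ _ _ id _ Function.bijective_id, one_mul, mul_one,
      submatrix_submatrix, Function.id_comp]
  have S_coisometry : S * Sᴴ = 1 := by
    rw [← submatrix_one _ Subtype.val_injective, ← S_mul,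
      Matrix.mul_one]
  refine ⟨S * Uᴴ, (IsContraction.of_mul_conjTranspose_self S_coisometry).mul
    (IsContraction.of_conjTranspose_mul_self hU).conjTranspose, ?_⟩
  calc (S * Uᴴ * Y) * (S * Uᴴ * Y)ᴴ = S * (Uᴴ * (Y * Yᴴ) * U) * Sᴴ := by
        simp only [conjTranspose_mul, conjTranspose_conjTranspose, Matrix.mul_assoc]
    _ = S * (Uᴴ * U * diagonal d * (Uᴴ * U)) * Sᴴ := by
        simp only [hY, Matrix.mul_assoc]
    _ = diagonal fun x : T => d x := by
        rw [hU, Matrix.one_mul, Matrix.mul_one, S_mul,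
          submatrix_diagonal _ _ Subtype.val_injective]
        rfl

lemma exists_conjTranspose_mul_self_eq_one {T : Type*} [Fintype T] [DecidableEq T]
    (h : Fintype.card T ≤ Fintype.card α) : ∃ E : Matrix α T ℂ, Eᴴ * E = 1 := by
  classical
  obtain ⟨e⟩ := Function.Embedding.nonempty_of_card_le h
  refine ⟨(1 : Matrix α α ℂ).submatrix id e, ?_⟩
  rw [conjTranspose_submatrix, conjTranspose_one, ← submatrix_mul _ _ _ id _ Function.bijective_id,
    Matrix.mul_one, submatrix_one _ e.injective]

lemma purity_mul_of_conjTranspose_mul_self {t : Type*} [Fintype t] [DecidableEq t]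
    {E : Matrix α t ℂ} (hE : Eᴴ * E = 1) (X : Matrix t q ℂ) : purity (E * X) = purity X := by
  rw [purity, purity, norm_mul_conjTranspose_self, norm_mul_conjTranspose_self, conjTranspose_mul,
    Matrix.mul_assoc, ← Matrix.mul_assoc Eᴴ, hE, Matrix.one_mul]

lemma exists_isTypicalCompression {Y : Matrix a q ℂ} {U : Matrix a a ℂ} (hU : Uᴴ * U = 1)
    {p : a → ℝ} (hY : Y * Yᴴ = U * diagonal (fun x => (p x : ℂ)) * Uᴴ) {T : Finset a}
    (hT : T.card ≤ Fintype.card α) {η μ : ℝ} (hη : 1 - η ≤ ∑ x ∈ T, p x)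
    (hμ : ∑ x ∈ T, p x ^ 2 ≤ μ) :
    ∃ P : Matrix α a ℂ, IsTypicalCompression P Y η μ := by
  obtain ⟨R, hR, gram⟩ := exists_isContraction_gram_eq_diagonal hU hY T
  obtain ⟨E, hE⟩ := exists_conjTranspose_mul_self_eq_one ((Fintype.card_coe T).trans_le hT)
  refine ⟨E * R, (IsContraction.of_conjTranspose_mul_self hE).mul hR, ?_, ?_⟩
  · have norm_sq : ((‖R * Y‖ ^ 2 : ℝ) : ℂ) = (∑ x ∈ T, p x : ℝ) := by
      rw [← trace_mul_conjTranspose_self, gram, trace_diagonal, Complex.ofReal_sum,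
        Finset.sum_coe_sort T fun x => (p x : ℂ)]
    rwa [Matrix.mul_assoc, norm_mul_sq_of_conjTranspose_mul_self hE, Complex.ofReal_inj.1 norm_sq]
  · rwa [Matrix.mul_assoc, purity_mul_of_conjTranspose_mul_self hE, purity, gram,
      norm_diagonal_ofReal_sq fun x : T => p x, Finset.sum_coe_sort T fun x => p x ^ 2]

end SpectralProjection

section TypicalCompression

variable {a : Type} [Fintype a] [DecidableEq a]

lemma tensorPower_eq_conj_diagonal {ρ : Matrix a a ℂ} (hρ : ρ.IsHermitian) (n : ℕ) :
    ∃ U : Matrix (Fin n → a) (Fin n → a) ℂ, Uᴴ * U = 1 ∧ tensorPower n ρ =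
      U * diagonal (fun x => ((∏ k, hρ.eigenvalues (x k) : ℝ) : ℂ)) * Uᴴ := by
  refine ⟨tensorPower n (hρ.eigenvectorUnitary : Matrix a a ℂ), ?_, ?_⟩
  · rw [← tensorPower_conjTranspose, ← tensorPower_mul, ← star_eq_conjTranspose,
      Unitary.coe_star_mul_self, tensorPower_one]
  · conv_lhs => rw [hρ.spectral_theorem, Unitary.conjStarAlgAut_apply]
    simp only [star_eq_conjTranspose, tensorPower_mul, tensorPower_conjTranspose,
      tensorPower_diagonal, Function.comp_apply, Complex.ofReal_prod, Complex.coe_algebraMap]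

lemma eventually_exists_isTypicalCompression {ρ : Matrix a a ℂ} (hρ : ρ.PosSemidef)
    (hρ1 : ρ.trace = 1) {δ η : ℝ} (hδ : 0 < δ) (hη : 0 < η) :
    ∀ᶠ n : ℕ in atTop, ∀ (α q : Type) [Fintype α] [Fintype q] (Y : Matrix (Fin n → a) q ℂ),
      ⌊(2 : ℝ) ^ (n * (vnEntropy ρ + δ))⌋₊ ≤ Fintype.card α → Y * Yᴴ = tensorPower n ρ →
      ∃ P : Matrix α (Fin n → a) ℂ,
        IsTypicalCompression P Y η (2 ^ (-(n * (vnEntropy ρ - δ)))) := by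
  have hp1 : ∑ i, hρ.1.eigenvalues i = 1 := by
    rw [hρ.1.trace_eq_sum_eigenvalues, ← RCLike.ofReal_sum] at hρ1
    exact Complex.ofReal_eq_one.1 hρ1
  filter_upwards [eventually_one_sub_le_sum_typicalSet hρ.eigenvalues_nonneg hp1 hδ hη]
    with n probability α q _ _ Y hα hY
  rw [vnEntropy_eq_shannonEntropy hρ.1] at hα ⊢
  obtain ⟨U, hU, spectral⟩ := tensorPower_eq_conj_diagonal hρ.1 n
  exact exists_isTypicalCompression hU (hY.trans spectral)
    ((Nat.le_floor (card_typicalSet_le hρ.eigenvalues_nonneg hp1 n δ)).trans hα) probability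
    (sum_sq_typicalSet_le hρ.eigenvalues_nonneg hp1 n δ)

end TypicalCompression

section Subadditivity

lemma one_sub_sq_le_card_mul_of_isTypicalCompression {a b r α β ρ : Type*} [Fintype a] [Fintype b]
    [Fintype r] [Fintype α] [Fintype β] [Fintype ρ] [DecidableEq a] [DecidableEq b] [DecidableEq r]
    {M : Matrix (a × b) r ℂ} (hM : ‖M‖ = 1) {PA : Matrix α a ℂ} {PB : Matrix β b ℂ}
    {P : Matrix ρ r ℂ} {η μA μB μ : ℝ} (hη : 3 * η ≤ 1)
    (hA : IsTypicalCompression PA (sliceA M) η μA) (hB : IsTypicalCompression PB (sliceB M) η μB)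
    (hP : IsTypicalCompression P Mᵀ η μ) :
    (1 - 3 * η) ^ 2 ≤ Fintype.card α * Fintype.card β * μ := by
  classical
  have norm_sq : 1 - 3 * η ≤ ‖(PA ⊗ₖ PB) * M * Pᵀ‖ ^ 2 := by
    refine le_trans (by linarith) (one_sub_add_le_norm_kronecker_mul_mul_sq hM hA.isContraction
      hB.isContraction hP.isContraction.transpose hA.le_norm_sq hB.le_norm_sq (ηR := η) ?_)
    rw [← frobenius_norm_transpose, transpose_mul, transpose_transpose]
    exact hP.le_norm_sq
  have purity_le : purity ((PA ⊗ₖ PB) * M * Pᵀ) ≤ μ := by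
    rw [← purity_transpose, transpose_mul, transpose_mul, transpose_transpose, ← Matrix.mul_assoc]
    exact (purity_mul_le _ (hA.isContraction.kronecker hB.isContraction).transpose).trans
      hP.purity_le
  calc (1 - 3 * η) ^ 2 ≤ (‖(PA ⊗ₖ PB) * M * Pᵀ‖ ^ 2) ^ 2 :=
        pow_le_pow_left₀ (by linarith) norm_sq 2
    _ = ‖(PA ⊗ₖ PB) * M * Pᵀ‖ ^ 4 := by rw [← pow_mul]
    _ ≤ Fintype.card (α × β) * purity ((PA ⊗ₖ PB) * M * Pᵀ) := norm_pow_four_le_card_mul _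
    _ ≤ Fintype.card α * Fintype.card β * μ := by
        rw [Fintype.card_prod, Nat.cast_mul]
        gcongr

lemma tendsto_two_rpow_neg_natCast_mul {g : ℝ} (hg : 0 < g) :
    Tendsto (fun n : ℕ => (2 : ℝ) ^ (-(n * g))) atTop (nhds 0) := by
  refine (tendsto_rpow_atBot_of_base_gt_one 2 one_lt_two).comp ?_
  exact tendsto_neg_atTop_atBot.comp (tendsto_natCast_atTop_atTop.atTop_mul_const hg)

variable {ιA ιB ιR : Type} [Fintype ιA] [DecidableEq ιA] [Fintype ιB] [DecidableEq ιB]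
    [Fintype ιR] [DecidableEq ιR] {φ : ιA × (ιB × ιR) → ℂ}

lemma eventually_exists_isTypicalCompression_sourceMatrix (hφ : star φ ⬝ᵥ φ = 1) {δ η : ℝ}
    (hδ : 0 < δ) (hη : 0 < η) :
    ∀ᶠ n : ℕ in atTop, ∀ (α β : Type) [Fintype α] [Fintype β],
      ⌊(2 : ℝ) ^ (n * (vnEntropy (redA φ) + δ))⌋₊ ≤ Fintype.card α →
      ⌊(2 : ℝ) ^ (n * (vnEntropy (redB φ) + δ))⌋₊ ≤ Fintype.card β →
      (∃ PA : Matrix α (Fin n → ιA) ℂ, IsTypicalCompression PA (sliceA (sourceMatrix φ n)) η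
        (2 ^ (-(n * (vnEntropy (redA φ) - δ))))) ∧
      (∃ PB : Matrix β (Fin n → ιB) ℂ, IsTypicalCompression PB (sliceB (sourceMatrix φ n)) η
        (2 ^ (-(n * (vnEntropy (redB φ) - δ))))) ∧
      ∃ P : Matrix (Fin ⌊(2 : ℝ) ^ (n * (vnEntropy (redR φ) + δ))⌋₊) (Fin n → ιR) ℂ,
        IsTypicalCompression P (sourceMatrix φ n)ᵀ η (2 ^ (-(n * (vnEntropy (redR φ) - δ)))) := by
  filter_upwards [eventually_exists_isTypicalCompression (posSemidef_redA φ) (trace_redA hφ) hδ hη,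
    eventually_exists_isTypicalCompression (posSemidef_redB φ) (trace_redB hφ) hδ hη,
    eventually_exists_isTypicalCompression (posSemidef_redR φ) (trace_redR hφ) hδ hη]
    with n typical_A typical_B typical_R α β _ _ hα hβ
  exact ⟨typical_A α _ _ hα (sliceA_sourceMatrix_mul_conjTranspose φ n),
    typical_B β _ _ hβ (sliceB_sourceMatrix_mul_conjTranspose φ n),
    typical_R _ _ _ (Fintype.card_fin _).ge (transpose_sourceMatrix_mul_conjTranspose φ n)⟩

lemma vnEntropy_redR_le (hφ : star φ ⬝ᵥ φ = 1) :
    vnEntropy (redR φ) ≤ vnEntropy (redA φ) + vnEntropy (redB φ) := by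
  by_contra! hlt
  set δ := (vnEntropy (redR φ) - vnEntropy (redA φ) - vnEntropy (redB φ)) / 6 with hδ_def
  have hδ : 0 < δ := by linarith
  have lower : ∀ᶠ n : ℕ in atTop, (1 / 4 : ℝ) ≤ 2 ^ (-(n * (3 * δ))) := by
    filter_upwards [eventually_exists_isTypicalCompression_sourceMatrix hφ hδ
      (η := 1 / 6) (by norm_num)] with n typical
    obtain ⟨⟨PA, hA⟩, ⟨PB, hB⟩, P, hP⟩ := typical (Fin _) (Fin _) (Fintype.card_fin _).ge
      (Fintype.card_fin _).ge
    have bound := one_sub_sq_le_card_mul_of_isTypicalCompression (norm_sourceMatrix hφ n)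
      (by norm_num) hA hB hP
    simp only [Fintype.card_fin] at bound
    calc (1 / 4 : ℝ) = (1 - 3 * (1 / 6)) ^ 2 := by norm_num
      _ ≤ _ := bound
      _ ≤ 2 ^ (n * (vnEntropy (redA φ) + δ)) * 2 ^ (n * (vnEntropy (redB φ) + δ)) *
          2 ^ (-(n * (vnEntropy (redR φ) - δ))) := by
          gcongr <;> exact Nat.floor_le (by positivity)
      _ = 2 ^ (-(n * (3 * δ))) := by
          rw [← Real.rpow_add two_pos, ← Real.rpow_add two_pos, hδ_def]
          congr 1
          ring
  have := ge_of_tendsto (tendsto_two_rpow_neg_natCast_mul (by positivity)) lower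
  norm_num at this

end Subadditivity

section CodeForCopies

lemma nonempty_of_star_dotProduct_self_eq_one {ιA ιB ιR : Type*} [Fintype ιA] [Fintype ιB]
    [Fintype ιR] {φ : ιA × (ιB × ιR) → ℂ} (hφ : star φ ⬝ᵥ φ = 1) : Nonempty ιA ∧ Nonempty ιB := by
  have : Nonempty (ιA × (ιB × ιR)) := by
    by_contra hempty
    rw [not_nonempty_iff] at hempty
    exact zero_ne_one ((Finset.sum_of_isEmpty _).symm.trans hφ)
  exact ⟨this.map Prod.fst, this.map fun x => x.2.1⟩

variable {ιA ιB ιR : Type} [Fintype ιA] [DecidableEq ιA] [Fintype ιB] [DecidableEq ιB]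
    [Fintype ιR] [DecidableEq ιR] {φ : ιA × (ιB × ιR) → ℂ}

lemma exists_isometry_le_codeFidelity_of_isTypicalCompression (hφ : star φ ⬝ᵥ φ = 1)
    {n cA wA cB wB dR : ℕ} (hcA : 0 < cA) (hwA : 0 < wA) (hcB : 0 < cB) (hwB : 0 < wB)
    {PA : Matrix (Fin cA × Fin wA) (Fin n → ιA) ℂ} {PB : Matrix (Fin cB × Fin wB) (Fin n → ιB) ℂ}
    {P : Matrix (Fin dR) (Fin n → ιR) ℂ} {η μA μB μR : ℝ}
    (hA : IsTypicalCompression PA (sliceA (sourceMatrix φ n)) η μA)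
    (hB : IsTypicalCompression PB (sliceB (sourceMatrix φ n)) η μB)
    (hR : IsTypicalCompression P (sourceMatrix φ n)ᵀ η μR) :
    ∃ (dA dB dC : ℕ) (EA : Matrix (Fin cA × Fin dA) (Fin n → ιA) ℂ)
      (EB : Matrix (Fin cB × Fin dB) (Fin n → ιB) ℂ)
      (D : Matrix (((Fin n → ιA) × (Fin n → ιB)) × Fin dC) (Fin cA × Fin cB) ℂ),
      EAᴴ * EA = 1 ∧ EBᴴ * EB = 1 ∧ Dᴴ * D = 1 ∧
      1 - (6 * η + 2 * √η) - √(decouplingError dR cA wA cB wB μA μB) ≤ codeFidelity φ EA EB D := by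
  rw [Fin.pos_iff_nonempty] at hcA hwA hcB hwB
  obtain ⟨KA, KB, Z, hKA, hKB, hZ, overlap⟩ :=
    exists_isContraction_le_re_trace_of_isTypicalCompression (norm_sourceMatrix hφ n) hA hB
      hR.isContraction hR.le_norm_sq
  obtain ⟨_, _⟩ := nonempty_of_star_dotProduct_self_eq_one hφ
  obtain ⟨dA, dB, dC, EA, EB, D, hEA, hEB, hD, fidelity⟩ :=
    exists_isometry_sq_le_codeFidelity φ hKA hKB hZ
  refine ⟨dA, dB, dC, EA, EB, D, hEA, hEB, hD, le_trans ?_ fidelity⟩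
  set t := ((withEntanglement (Fin wA × Fin wB) (sourceMatrix φ n))ᴴ *
    (Z * splitTransmitted ((KA ⊗ₖ KB) * sourceMatrix φ n))).trace
  simp only [Fintype.card_fin] at overlap
  have re_le := Complex.re_le_norm t
  linarith [sq_nonneg (‖t‖ - 1)]

end CodeForCopies

section Rates

/-- The dimensions `c` of the transmitted part and `w` of the kept part of a compressed system of
dimension `2 ^ (n * (h + δ))`, when `n * Q` qubits are transmitted. -/
structure IsRateSplitting (n : ℕ) (Q h δ : ℝ) (c w : ℕ) : Prop where
  transmitted_pos : 0 < c
  kept_pos : 0 < w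
  floor_le_mul : ⌊(2 : ℝ) ^ (n * (h + δ))⌋₊ ≤ c * w
  logb_transmitted_le : Real.logb 2 c ≤ n * Q
  half_le_transmitted : (2 : ℝ) ^ (n * Q) / 2 ≤ c
  kept_le : w ≤ 3 * (2 : ℝ) ^ (n * (max 0 (h - Q) + δ))

lemma exists_isRateSplitting (n : ℕ) {Q : ℝ} (hQ : 0 ≤ Q) (h : ℝ) {δ : ℝ} (hδ : 0 ≤ δ) :
    ∃ c w : ℕ, IsRateSplitting n Q h δ c w := by
  set z : ℝ := 2 ^ (n * Q) with hz
  have one_le_z : 1 ≤ z := Real.one_le_rpow one_le_two (by positivity)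
  have c_pos : 0 < ⌊z⌋₊ := Nat.floor_pos.2 one_le_z
  have c_le : (⌊z⌋₊ : ℝ) ≤ z := Nat.floor_le (by positivity)
  have half_le : z / 2 ≤ ⌊z⌋₊ := by
    have : (1 : ℝ) ≤ ⌊z⌋₊ := Nat.one_le_cast.2 c_pos
    linarith [Nat.lt_floor_add_one z]
  have c_pos' : (0 : ℝ) < ⌊z⌋₊ := Nat.cast_pos.2 c_pos
  refine ⟨⌊z⌋₊, ⌈(2 : ℝ) ^ (n * (h + δ)) / ⌊z⌋₊⌉₊, c_pos, Nat.ceil_pos.2 (by positivity),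
    Nat.floor_le_of_le ?_, ?_, half_le, ?_⟩
  · rw [Nat.cast_mul, ← div_le_iff₀' c_pos']
    exact Nat.le_ceil _
  · rwa [Real.logb_le_iff_le_rpow one_lt_two c_pos']
  · have quotient_le : (2 : ℝ) ^ (n * (h + δ)) / ⌊z⌋₊ ≤ 2 * 2 ^ (n * (max 0 (h - Q) + δ)) := by
      calc (2 : ℝ) ^ (n * (h + δ)) / ⌊z⌋₊ ≤ 2 ^ (n * (h + δ)) / (z / 2) := by gcongr
        _ = 2 * 2 ^ (n * (h - Q + δ)) := by
          rw [show n * (h - Q + δ) = n * (h + δ) - n * Q by ring, Real.rpow_sub two_pos, ← hz]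
          field_simp
        _ ≤ 2 * 2 ^ (n * (max 0 (h - Q) + δ)) := by
          gcongr
          · exact one_le_two
          · exact le_max_right _ _
    have one_le : (1 : ℝ) ≤ 2 ^ (n * (max 0 (h - Q) + δ)) :=
      Real.one_le_rpow one_le_two (by positivity)
    linarith [Nat.ceil_lt_add_one (a := (2 : ℝ) ^ (n * (h + δ)) / ⌊z⌋₊) (by positivity)]

lemma exists_pos_exponent_gap {hA hB hR QA QB : ℝ} (hsub : hR ≤ hA + hB)
    (hQA : hA + hR - hB < 2 * QA) (hQB : hB + hR - hA < 2 * QB)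
    (hsum : hA + hB + hR < 2 * (QA + QB)) :
    ∃ g > 0, hR + max 0 (hA - QA) + max 0 (hB - QB) - QA - QB ≤ -g ∧
      hR + max 0 (hA - QA) - hB - QA ≤ -g ∧ hR + max 0 (hB - QB) - hA - QB ≤ -g := by
  set e := hR + max 0 (hA - QA) + max 0 (hB - QB) - QA - QB with he
  set eA := hR + max 0 (hA - QA) - hB - QA with heA
  set eB := hR + max 0 (hB - QB) - hA - QB with heB
  have negative : max e (max eA eB) < 0 := by
    rcases max_cases 0 (hA - QA) with ⟨h, _⟩ | ⟨h, _⟩ <;>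
    rcases max_cases 0 (hB - QB) with ⟨h', _⟩ | ⟨h', _⟩ <;>
    rw [h] at he heA <;> rw [h'] at he heB <;>
    refine max_lt ?_ (max_lt ?_ ?_) <;> linarith
  refine ⟨-max e (max eA eB), neg_pos.2 negative, ?_, ?_, ?_⟩ <;> rw [neg_neg]
  · exact le_max_left _ _
  · exact (le_max_left _ _).trans (le_max_right _ _)
  · exact (le_max_right _ _).trans (le_max_right _ _)

lemma decouplingError_le {dR cA wA cB wB : ℕ} {μA μB r x y p q : ℝ} (hwA : 0 < wA) (hwB : 0 < wB)
    (hp : 0 < p) (hq : 0 < q) (hμA : 0 ≤ μA) (hμB : 0 ≤ μB) (hr : dR ≤ r) (hx : wA ≤ 3 * x)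
    (hy : wB ≤ 3 * y) (hcA : p / 2 ≤ cA) (hcB : q / 2 ≤ cB) :
    decouplingError dR cA wA cB wB μA μB ≤
      36 * (r * x * y / (p * q)) + 6 * (r * x * μB / p) + 6 * (r * y * μA / q) := by
  have hwA' : (0 : ℝ) < wA := Nat.cast_pos.2 hwA
  have hwB' : (0 : ℝ) < wB := Nat.cast_pos.2 hwB
  have hr0 : 0 ≤ r := (Nat.cast_nonneg dR).trans hr
  have hx0 : 0 ≤ x := by linarith
  have hy0 : 0 ≤ y := by linarith
  have hcA0 : (0 : ℝ) < cA := by linarith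
  have hcB0 : (0 : ℝ) < cB := by linarith
  calc decouplingError dR cA wA cB wB μA μB =
        dR * wA * wB / (cA * cB) + dR * wA * μB / cA + dR * wB * μA / cB := by
        rw [decouplingError]
        field_simp
    _ ≤ r * (3 * x) * (3 * y) / (p / 2 * (q / 2)) + r * (3 * x) * μB / (p / 2) +
        r * (3 * y) * μA / (q / 2) := by gcongr
    _ = _ := by ring

lemma decouplingError_le_of_isRateSplitting {n dR cA wA cB wB : ℕ} {hA hB hR QA QB g : ℝ}
    (gap : hR + max 0 (hA - QA) + max 0 (hB - QB) - QA - QB ≤ -g)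
    (gap_A : hR + max 0 (hA - QA) - hB - QA ≤ -g) (gap_B : hR + max 0 (hB - QB) - hA - QB ≤ -g)
    (hdR : dR ≤ (2 : ℝ) ^ (n * (hR + g / 6))) (splitting_A : IsRateSplitting n QA hA (g / 6) cA wA)
    (splitting_B : IsRateSplitting n QB hB (g / 6) cB wB) :
    decouplingError dR cA wA cB wB (2 ^ (-(n * (hA - g / 6)))) (2 ^ (-(n * (hB - g / 6)))) ≤
      48 * 2 ^ (-(n * (g / 2))) := by
  have rate_le : ∀ z : ℝ, z ≤ -g → (2 : ℝ) ^ (n * (z + g / 2)) ≤ 2 ^ (-(n * (g / 2))) := by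
    intro z hz
    rw [← mul_neg]
    exact Real.rpow_le_rpow_of_exponent_le one_le_two (by gcongr; linarith)
  refine (decouplingError_le splitting_A.kept_pos splitting_B.kept_pos (by positivity)
    (by positivity) (by positivity) (by positivity) hdR splitting_A.kept_le splitting_B.kept_le
    splitting_A.half_le_transmitted splitting_B.half_le_transmitted).trans ?_
  have bound := rate_le _ gap
  have bound_A := rate_le _ gap_A
  have bound_B := rate_le _ gap_B
  simp only [← Real.rpow_add two_pos, ← Real.rpow_sub two_pos]
  ring_nf at bound bound_A bound_B ⊢
  linarith

lemma exists_eventually_sqrt_decouplingError_le {hA hB hR QA QB : ℝ} (hsub : hR ≤ hA + hB)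
    (hQA : hA + hR - hB < 2 * QA) (hQB : hB + hR - hA < 2 * QB)
    (hsum : hA + hB + hR < 2 * (QA + QB)) {ε : ℝ} (hε : 0 < ε) :
    ∃ δ > 0, ∀ᶠ n : ℕ in atTop, ∀ cA wA cB wB : ℕ, IsRateSplitting n QA hA δ cA wA →
      IsRateSplitting n QB hB δ cB wB →
      √(decouplingError ⌊(2 : ℝ) ^ (n * (hR + δ))⌋₊ cA wA cB wB (2 ^ (-(n * (hA - δ))))
        (2 ^ (-(n * (hB - δ))))) ≤ ε := by
  obtain ⟨g, hg, gap, gap_A, gap_B⟩ := exists_pos_exponent_gap hsub hQA hQB hsum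
  refine ⟨g / 6, by positivity, ?_⟩
  have vanishing : Tendsto (fun n : ℕ => 48 * (2 : ℝ) ^ (-(n * (g / 2)))) atTop (nhds 0) := by
    simpa only [mul_zero] using (tendsto_two_rpow_neg_natCast_mul (half_pos hg)).const_mul 48
  filter_upwards [vanishing.eventually_le_const (sq_pos_of_pos hε)] with n small
    cA wA cB wB splitting_A splitting_B
  exact Real.sqrt_le_iff.2 ⟨hε.le, (decouplingError_le_of_isRateSplitting gap gap_A gap_B
    (Nat.floor_le (by positivity)) splitting_A splitting_B).trans small⟩

lemma exists_pos_six_mul_add_two_mul_sqrt_le {ε : ℝ} (hε : 0 < ε) :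
    ∃ η > 0, 6 * η + 2 * √η ≤ ε := by
  have limit : Tendsto (fun η : ℝ => 6 * η + 2 * √η) (nhds 0) (nhds 0) :=
    Continuous.tendsto' (by fun_prop) _ _ (by simp)
  obtain ⟨η, small, pos⟩ := (((limit.mono_left nhdsWithin_le_nhds).eventually_le_const hε).and
    (self_mem_nhdsWithin (s := Set.Ioi (0 : ℝ)))).exists
  exact ⟨η, pos, small⟩

end Rates

end

/-- **Theorem 5: inner bound for fully quantum distributed compression.**  Every rate
pair `(Q_A, Q_B)` of nonnegative reals with `Q_A > ½I(A;R)`, `Q_B > ½I(B;R)` and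
`Q_A + Q_B > ½J(A;B)` is achievable, where `J(A;B) = H(A) + H(B) + H(AB)`. -/
theorem distributed_compression_inner_bound
    {ιA ιB ιR : Type} [Fintype ιA] [DecidableEq ιA] [Fintype ιB] [DecidableEq ιB]
    [Fintype ιR] [DecidableEq ιR]
    (φ : ιA × (ιB × ιR) → ℂ) (hφ : star φ ⬝ᵥ φ = 1)
    (QA QB : ℝ) (hQA0 : 0 ≤ QA) (hQB0 : 0 ≤ QB)
    (hQA : QA > (1/2) * (vnEntropy (redA φ) + vnEntropy (redR φ) - vnEntropy (redAR φ)))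
    (hQB : QB > (1/2) * (vnEntropy (redB φ) + vnEntropy (redR φ) - vnEntropy (redBR φ)))
    (hsum : QA + QB >
      (1/2) * (vnEntropy (redA φ) + vnEntropy (redB φ) + vnEntropy (redAB φ))) :
    achievable φ QA QB := by
  rw [vnEntropy_redAR] at hQA
  rw [vnEntropy_redBR] at hQB
  rw [vnEntropy_redAB] at hsum
  intro ε hε
  obtain ⟨η, hη, η_small⟩ := exists_pos_six_mul_add_two_mul_sqrt_le (half_pos hε)
  obtain ⟨δ, hδ, error_small⟩ := exists_eventually_sqrt_decouplingError_le (vnEntropy_redR_le hφ)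
    (QA := QA) (QB := QB) (by linarith) (by linarith) (by linarith) (half_pos hε)
  refine Filter.eventually_atTop.1 ?_
  filter_upwards [error_small, eventually_exists_isTypicalCompression_sourceMatrix hφ hδ hη]
    with n error_small typical
  obtain ⟨cA, wA, splitting_A⟩ := exists_isRateSplitting n hQA0 (vnEntropy (redA φ)) hδ.le
  obtain ⟨cB, wB, splitting_B⟩ := exists_isRateSplitting n hQB0 (vnEntropy (redB φ)) hδ.le
  obtain ⟨⟨PA, hPA⟩, ⟨PB, hPB⟩, PR, hPR⟩ := typical (Fin cA × Fin wA) (Fin cB × Fin wB)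
    (by simpa using splitting_A.floor_le_mul) (by simpa using splitting_B.floor_le_mul)
  obtain ⟨dA, dB, dC, EA, EB, D, hEA, hEB, hD, fidelity⟩ :=
    exists_isometry_le_codeFidelity_of_isTypicalCompression hφ splitting_A.transmitted_pos
      splitting_A.kept_pos splitting_B.transmitted_pos splitting_B.kept_pos hPA hPB hPR
  exact ⟨cA, dA, cB, dB, dC, EA, EB, D, hEA, hEB, hD, splitting_A.logb_transmitted_le,
    splitting_B.logb_transmitted_le,
    by linarith [error_small cA wA cB wB splitting_A splitting_B]⟩
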